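/- arXiv:2012.14342 — 3 statements merged into one kernel-verified Lean document; each statement's English description precedes it below -/
import Mathlib

section
/- For every integer d ≥ 2, every d×d Hermitian matrix H, and every d×d density matrix ρ, the Haar variance of the mean energy is ∫_{U(d)} (Tr[U ρ U† H] − Tr[H]/d)² dμ_Haar(U) = (1/(d²−1)) · (Tr[H²] − (Tr[H])²/d) · (Tr[ρ²] − 1/d). -/
open MeasureTheory Matrix
open scoped ComplexOrder

noncomputable instance unitaryGroup.measurableSpace (d : ℕ) :
    MeasurableSpace (Matrix.unitaryGroup (Fin d) ℂ) := borel _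

instance unitaryGroup.borelSpace (d : ℕ) :
    BorelSpace (Matrix.unitaryGroup (Fin d) ℂ) := ⟨rfl⟩

/-!
The second moment `B(X, Y) = ∫ Tr[U ρ U† X] Tr[U ρ U† Y] dμ` is a symmetric bilinear form which, by
left invariance of `μ`, is unchanged when `X` and `Y` are conjugated by the same unitary. Any such
form is `a Tr[XY] + b Tr[X] Tr[Y]`: invariance under permutation matrices gives this for diagonal
matrices, the spectral theorem extends it to `X = Y` Hermitian, and polarization to all matrices.
Two contractions determine `a` and `b`: with `N` the dimension, `B(1, 1) = Tr[ρ]² = a N + b N²` and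
`∑ i j, B(Eᵢⱼ, Eⱼᵢ) = Tr[ρ²] = a N² + b N`. The variance is `B(X, X)` for the traceless matrix
`X = H - (Tr[H] / N) 1`.
-/

section UnitaryGroup

variable {n : Type*} [Fintype n] [DecidableEq n]

instance compactSpace_unitaryGroup {𝕜 : Type*} [RCLike 𝕜] :
    CompactSpace (unitaryGroup n 𝕜) := by
  have hK : IsCompact (Set.univ.pi fun _ : n => Set.univ.pi fun _ : n =>
      Metric.closedBall (0 : 𝕜) 1) :=
    isCompact_univ_pi fun _ => isCompact_univ_pi fun _ => isCompact_closedBall _ _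
  have h_closed : IsClosed (unitaryGroup n 𝕜 : Set (Matrix n n 𝕜)) := isClosed_unitary
  refine isCompact_iff_compactSpace.mp (hK.of_isClosed_subset h_closed fun U hU i _ j _ => ?_)
  simpa using entry_norm_bound_of_unitary hU i j

lemma permMatrix_mem_unitaryGroup {R : Type*} [CommRing R] [StarRing R] (σ : Equiv.Perm n) :
    σ.permMatrix R ∈ unitaryGroup n R := by
  rw [mem_unitaryGroup_iff, star_eq_conjTranspose, conjTranspose_permMatrix, ← permMatrix_mul,
    inv_mul_cancel, permMatrix_one]

lemma permMatrix_mul_mul_star {R : Type*} [NonAssocSemiring R] [StarRing R] (σ : Equiv.Perm n)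
    (X : Matrix n n R) :
    σ.permMatrix R * X * star (σ.permMatrix R) = X.submatrix σ σ := by
  rw [star_eq_conjTranspose, conjTranspose_permMatrix, Equiv.Perm.permMatrix,
    Equiv.Perm.permMatrix, PEquiv.toMatrix_toPEquiv_mul, PEquiv.mul_toMatrix_toPEquiv,
    submatrix_submatrix]
  rfl

lemma trace_conjStarAlgAut {R : Type*} [CommRing R] [StarRing R] (U : unitaryGroup n R)
    (X : Matrix n n R) : (Unitary.conjStarAlgAut R _ U X).trace = X.trace := by
  rw [Unitary.conjStarAlgAut_apply, trace_mul_cycle, Unitary.coe_star_mul_self, Matrix.one_mul]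

lemma continuous_conjStarAlgAut {R : Type*} [CommRing R] [StarRing R] [TopologicalSpace R]
    [IsTopologicalRing R] [ContinuousStar R] (X : Matrix n n R) :
    Continuous fun U : unitaryGroup n R => Unitary.conjStarAlgAut R _ U X := by
  simp only [Unitary.conjStarAlgAut_apply]
  fun_prop

end UnitaryGroup

section BilinForm

lemma sum_trace_mul_single_mul_trace_mul_single {n R : Type*} [Fintype n] [DecidableEq n]
    [CommSemiring R] (Z : Matrix n n R) :
    ∑ i, ∑ j, (Z * single i j 1).trace * (Z * single j i 1).trace = (Z * Z).trace := by
  simp only [trace_mul_single, MulOpposite.op_one, one_smul]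
  rw [Finset.sum_comm]
  simp only [trace, diag_apply, Matrix.mul_apply]

lemma exists_eq_add_ite_of_perm_invariant {ι R : Type*} [DecidableEq ι] [AddCommGroup R]
    (f : ι → ι → R) (hf : ∀ (σ : Equiv.Perm ι) i j, f (σ i) (σ j) = f i j) :
    ∃ a b : R, ∀ i j, f i j = (if i = j then a else 0) + b := by
  obtain _ | _ := subsingleton_or_nontrivial ι
  · obtain _ | ⟨⟨i₀⟩⟩ := isEmpty_or_nonempty ι
    · exact ⟨0, 0, isEmptyElim⟩
    · exact ⟨f i₀ i₀, 0, fun i j => by simp [Subsingleton.elim i i₀, Subsingleton.elim j i₀]⟩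
  · obtain ⟨i₀, i₁, hne⟩ := exists_pair_ne ι
    refine ⟨f i₀ i₀ - f i₀ i₁, f i₀ i₁, fun i j => ?_⟩
    obtain rfl | hij := eq_or_ne i j
    · simpa using hf (Equiv.swap i₀ i) i₀ i₀
    · obtain ⟨σ, rfl, rfl⟩ := MulAction.is_two_pretransitive_iff.mp
        (Equiv.Perm.isMultiplyPretransitive ι 2) hne hij
      simpa [hne] using hf σ i₀ i₁

open ComplexStarModule in
lemma bilinForm_ext_of_isSelfAdjoint {A : Type*} [AddCommGroup A] [Module ℂ A] [StarAddMonoid A]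
    [StarModule ℂ A] {B C : LinearMap.BilinForm ℂ A} (hB : B.IsSymm) (hC : C.IsSymm)
    (h : ∀ x, IsSelfAdjoint x → B x x = C x x) : B = C := by
  have h_polar (x y : selfAdjoint A) : B x y = C x y := by
    rw [hB.polarization, hC.polarization, h _ x.2, h _ y.2, ← AddSubgroup.coe_add, h _ (x + y).2]
  refine LinearMap.BilinForm.ext_of_isSymm hB hC fun x => ?_
  rw [← realPart_add_I_smul_imaginaryPart x]
  simp only [map_add, map_smul, LinearMap.add_apply, LinearMap.smul_apply, h_polar]

variable {n : Type*} [Fintype n]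

/-- The symmetric bilinear form `(X, Y) ↦ a Tr[XY] + b Tr[X] Tr[Y]` on square matrices. -/
def traceBilinForm {R : Type*} [CommSemiring R] (a b : R) : LinearMap.BilinForm R (Matrix n n R) :=
  a • (LinearMap.mul R (Matrix n n R)).compr₂ (traceLinearMap n R R) +
    b • (LinearMap.mul R R).compl₁₂ (traceLinearMap n R R) (traceLinearMap n R R)

@[simp]
lemma traceBilinForm_apply {R : Type*} [CommSemiring R] (a b : R) (X Y : Matrix n n R) :
    traceBilinForm a b X Y = a * (X * Y).trace + b * (X.trace * Y.trace) :=
  rfl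

lemma isSymm_traceBilinForm {R : Type*} [CommSemiring R] (a b : R) :
    (traceBilinForm a b : LinearMap.BilinForm R (Matrix n n R)).IsSymm :=
  ⟨fun X Y => by
    rw [traceBilinForm_apply, traceBilinForm_apply, trace_mul_comm, mul_comm X.trace]⟩

variable [DecidableEq n]

lemma traceBilinForm_one_one {R : Type*} [CommSemiring R] (a b : R) :
    traceBilinForm a b (1 : Matrix n n R) 1 =
      a * Fintype.card n + b * Fintype.card n ^ 2 := by
  simp only [traceBilinForm_apply, Matrix.mul_one, trace_one, sq]

lemma trace_single_mul_trace_single {R : Type*} [CommSemiring R] (i j : n) :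
    (single i j (1 : R)).trace * (single j i (1 : R)).trace = if i = j then 1 else 0 := by
  obtain rfl | hij := eq_or_ne i j
  · simp
  · simp [hij]

lemma sum_traceBilinForm_single_single {R : Type*} [CommSemiring R] (a b : R) :
    ∑ i : n, ∑ j : n, traceBilinForm a b (single i j 1) (single j i 1) =
      a * Fintype.card n ^ 2 + b * Fintype.card n := by
  simp only [traceBilinForm_apply, single_mul_single_same, trace_single_eq_same,
    trace_single_mul_trace_single, mul_one, mul_ite, mul_zero, Finset.sum_add_distrib,
    Finset.sum_const, Finset.card_univ, nsmul_eq_mul, Finset.sum_ite_eq, Finset.mem_univ, if_true]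
  ring

/-- Invariance of a bilinear form on matrices under simultaneous conjugation of both arguments by
a unitary matrix. -/
def IsUnitarilyInvariant {R : Type*} [CommRing R] [StarRing R]
    (B : LinearMap.BilinForm R (Matrix n n R)) : Prop :=
  ∀ (V : unitaryGroup n R) (X Y : Matrix n n R),
    B (Unitary.conjStarAlgAut R _ V X) (Unitary.conjStarAlgAut R _ V Y) = B X Y

lemma isUnitarilyInvariant_traceBilinForm {R : Type*} [CommRing R] [StarRing R] (a b : R) :
    IsUnitarilyInvariant (traceBilinForm a b : LinearMap.BilinForm R (Matrix n n R)) :=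
  fun V X Y => by
    rw [traceBilinForm_apply, traceBilinForm_apply, ← map_mul, trace_conjStarAlgAut,
      trace_conjStarAlgAut, trace_conjStarAlgAut]

namespace IsUnitarilyInvariant

lemma apply_single_perm {R : Type*} [CommRing R] [StarRing R]
    {B : LinearMap.BilinForm R (Matrix n n R)} (hB : IsUnitarilyInvariant B)
    (σ : Equiv.Perm n) (i j : n) :
    B (single (σ i) (σ i) 1) (single (σ j) (σ j) 1) = B (single i i 1) (single j j 1) := by
  have h_conj (k : n) : Unitary.conjStarAlgAut R _
      ⟨σ.permMatrix R, permMatrix_mem_unitaryGroup σ⟩ (single (σ k) (σ k) (1 : R)) =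
      single k k 1 := by
    rw [Unitary.conjStarAlgAut_apply]
    refine (permMatrix_mul_mul_star σ _).trans ?_
    simp
  rw [← hB ⟨σ.permMatrix R, permMatrix_mem_unitaryGroup σ⟩, h_conj, h_conj]

variable {B C : LinearMap.BilinForm ℂ (Matrix n n ℂ)}

lemma ext_of_single (hB : IsUnitarilyInvariant B) (hC : IsUnitarilyInvariant C)
    (hB_symm : B.IsSymm) (hC_symm : C.IsSymm)
    (h : ∀ i j, B (single i i 1) (single j j 1) = C (single i i 1) (single j j 1)) : B = C := by
  have h_diag (x : n → ℂ) : B (diagonal x) (diagonal x) = C (diagonal x) (diagonal x) := by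
    have hx : diagonal x = ∑ i, x i • single i i (1 : ℂ) := by
      simp [smul_single, sum_single_eq_diagonal]
    simp only [hx, map_sum, map_smul, LinearMap.sum_apply, LinearMap.smul_apply, h]
  refine bilinForm_ext_of_isSelfAdjoint hB_symm hC_symm fun X hX => ?_
  rw [IsHermitian.spectral_theorem hX, hB, hC, h_diag]

theorem exists_eq_traceBilinForm (hB : IsUnitarilyInvariant B) (hB_symm : B.IsSymm) :
    ∃ a b : ℂ, B = traceBilinForm a b := by
  obtain ⟨a, b, hab⟩ := exists_eq_add_ite_of_perm_invariant
    (fun i j => B (single i i 1) (single j j 1)) hB.apply_single_perm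
  refine ⟨a, b, hB.ext_of_single (isUnitarilyInvariant_traceBilinForm a b) hB_symm
    (isSymm_traceBilinForm a b) fun i j => ?_⟩
  rw [hab]
  obtain rfl | hij := eq_or_ne i j
  · simp
  · simp [hij]

theorem apply_eq_trace_mul_add_trace_mul_trace [Nontrivial n] (hB : IsUnitarilyInvariant B)
    (hB_symm : B.IsSymm) (X Y : Matrix n n ℂ) :
    B X Y = 1 / ((Fintype.card n : ℂ) ^ 2 - 1) *
      ((∑ i, ∑ j, B (single i j 1) (single j i 1) - B 1 1 / Fintype.card n) * (X * Y).trace +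
        (B 1 1 - (∑ i, ∑ j, B (single i j 1) (single j i 1)) / Fintype.card n) *
          (X.trace * Y.trace)) := by
  obtain ⟨a, b, rfl⟩ := hB.exists_eq_traceBilinForm hB_symm
  have h_card_sq : (Fintype.card n : ℂ) ^ 2 - 1 ≠ 0 := by
    rw [sub_ne_zero]
    exact_mod_cast (Nat.one_lt_pow two_ne_zero Fintype.one_lt_card).ne'
  rw [traceBilinForm_one_one, sum_traceBilinForm_single_single, traceBilinForm_apply]
  field_simp
  ring

end IsUnitarilyInvariant

end BilinForm

section HaarMoment

variable {n : Type*} [Fintype n] [DecidableEq n] [MeasurableSpace (unitaryGroup n ℂ)]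
  [BorelSpace (unitaryGroup n ℂ)] (μ : Measure (unitaryGroup n ℂ))

lemma integrable_trace_conj_mul_trace_conj [IsFiniteMeasure μ] (ρ X Y : Matrix n n ℂ) :
    Integrable (fun U => (Unitary.conjStarAlgAut ℂ _ U ρ * X).trace *
      (Unitary.conjStarAlgAut ℂ _ U ρ * Y).trace) μ := by
  have h_cont := continuous_conjStarAlgAut ρ
  exact Continuous.integrable_of_hasCompactSupport (by fun_prop) (.of_compactSpace _)

/-- The second moment `(X, Y) ↦ ∫ Tr[U ρ U† X] Tr[U ρ U† Y] dμ` of the random matrix `U ρ U†`. -/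
noncomputable def secondMomentForm [IsFiniteMeasure μ] (ρ : Matrix n n ℂ) :
    LinearMap.BilinForm ℂ (Matrix n n ℂ) :=
  LinearMap.mk₂ ℂ
    (fun X Y => ∫ U, (Unitary.conjStarAlgAut ℂ _ U ρ * X).trace *
      (Unitary.conjStarAlgAut ℂ _ U ρ * Y).trace ∂μ)
    (fun X X' Y => by
      simp only [mul_add, trace_add, add_mul]
      exact integral_add (integrable_trace_conj_mul_trace_conj μ ρ X Y)
        (integrable_trace_conj_mul_trace_conj μ ρ X' Y))
    (fun c X Y => by
      simp only [Matrix.mul_smul, trace_smul, smul_eq_mul, mul_assoc, integral_const_mul])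
    (fun X Y Y' => by
      simp only [mul_add, trace_add]
      exact integral_add (integrable_trace_conj_mul_trace_conj μ ρ X Y)
        (integrable_trace_conj_mul_trace_conj μ ρ X Y'))
    (fun c X Y => by
      simp only [Matrix.mul_smul, trace_smul, smul_eq_mul, mul_left_comm, integral_const_mul])

lemma secondMomentForm_apply [IsFiniteMeasure μ] (ρ X Y : Matrix n n ℂ) :
    secondMomentForm μ ρ X Y = ∫ U, (Unitary.conjStarAlgAut ℂ _ U ρ * X).trace *
      (Unitary.conjStarAlgAut ℂ _ U ρ * Y).trace ∂μ :=
  rfl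

lemma isSymm_secondMomentForm [IsFiniteMeasure μ] (ρ : Matrix n n ℂ) :
    (secondMomentForm μ ρ).IsSymm :=
  ⟨fun X Y => by simp only [secondMomentForm_apply, mul_comm]⟩

lemma isUnitarilyInvariant_secondMomentForm [IsFiniteMeasure μ] [μ.IsMulLeftInvariant]
    (ρ : Matrix n n ℂ) : IsUnitarilyInvariant (secondMomentForm μ ρ) := by
  intro V X Y
  have h_conj (U : unitaryGroup n ℂ) (Z : Matrix n n ℂ) :
      (Unitary.conjStarAlgAut ℂ _ (V * U) ρ * Unitary.conjStarAlgAut ℂ _ V Z).trace =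
        (Unitary.conjStarAlgAut ℂ _ U ρ * Z).trace := by
    rw [Unitary.conjStarAlgAut_mul_apply, ← map_mul, trace_conjStarAlgAut]
  rw [secondMomentForm_apply, ← integral_mul_left_eq_self _ V]
  simp only [h_conj, secondMomentForm_apply]

variable [IsProbabilityMeasure μ]

lemma secondMomentForm_one_one (ρ : Matrix n n ℂ) :
    secondMomentForm μ ρ 1 1 = ρ.trace ^ 2 := by
  simp only [secondMomentForm_apply, Matrix.mul_one, trace_conjStarAlgAut, integral_const,
    probReal_univ, one_smul, sq]

lemma sum_secondMomentForm_single_single (ρ : Matrix n n ℂ) :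
    ∑ i, ∑ j, secondMomentForm μ ρ (single i j 1) (single j i 1) = (ρ * ρ).trace := by
  have h_int := integrable_trace_conj_mul_trace_conj μ ρ
  simp only [secondMomentForm_apply]
  simp only [← integral_finsetSum _ fun _ _ => h_int _ _,
    ← integral_finsetSum _ fun _ _ => integrable_finsetSum _ fun _ _ => h_int _ _,
    sum_trace_mul_single_mul_trace_mul_single, ← map_mul, trace_conjStarAlgAut, integral_const,
    probReal_univ, one_smul]

theorem integral_trace_conj_mul_trace_conj [Nontrivial n] [μ.IsMulLeftInvariant]
    (ρ X Y : Matrix n n ℂ) :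
    ∫ U : unitaryGroup n ℂ, ((U : Matrix n n ℂ) * ρ * star (U : Matrix n n ℂ) * X).trace *
        ((U : Matrix n n ℂ) * ρ * star (U : Matrix n n ℂ) * Y).trace ∂μ =
      1 / ((Fintype.card n : ℂ) ^ 2 - 1) *
        (((ρ * ρ).trace - ρ.trace ^ 2 / Fintype.card n) * (X * Y).trace +
          (ρ.trace ^ 2 - (ρ * ρ).trace / Fintype.card n) * (X.trace * Y.trace)) := by
  rw [← sum_secondMomentForm_single_single μ ρ, ← secondMomentForm_one_one μ ρ]
  exact (isUnitarilyInvariant_secondMomentForm μ ρ).apply_eq_trace_mul_add_trace_mul_trace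
    (isSymm_secondMomentForm μ ρ) X Y

theorem haar_variance_mean_energy_general [Nontrivial n] [μ.IsMulLeftInvariant]
    (H ρ : Matrix n n ℂ) :
    ∫ U : unitaryGroup n ℂ, (((U : Matrix n n ℂ) * ρ * star (U : Matrix n n ℂ) * H).trace -
        ρ.trace * H.trace / Fintype.card n) ^ 2 ∂μ =
      1 / ((Fintype.card n : ℂ) ^ 2 - 1) * ((H * H).trace - H.trace ^ 2 / Fintype.card n) *
        ((ρ * ρ).trace - ρ.trace ^ 2 / Fintype.card n) := by
  set c : ℂ := H.trace / Fintype.card n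
  have h_center (U : unitaryGroup n ℂ) :
      (U * ρ * star (U : Matrix n n ℂ) * H).trace - ρ.trace * H.trace / Fintype.card n =
        (U * ρ * star (U : Matrix n n ℂ) * (H - c • 1)).trace := by
    have h_tr : (U * ρ * star (U : Matrix n n ℂ)).trace = ρ.trace := trace_conjStarAlgAut U ρ
    simp only [mul_sub, Matrix.mul_smul, Matrix.mul_one, trace_sub, trace_smul, h_tr, smul_eq_mul,
      c]
    ring
  have h_trace : (H - c • (1 : Matrix n n ℂ)).trace = 0 := by
    simp [trace_sub, trace_smul, c]
  have h_sq : ((H - c • 1) * (H - c • 1)).trace = (H * H).trace - H.trace ^ 2 / Fintype.card n := by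
    simp only [mul_sub, sub_mul, Matrix.mul_smul, Matrix.smul_mul, Matrix.mul_one, Matrix.one_mul,
      trace_sub, trace_smul, trace_one, smul_eq_mul, c]
    field_simp
    ring
  simp only [h_center, sq (trace _)]
  rw [integral_trace_conj_mul_trace_conj, h_trace, h_sq]
  ring

end HaarMoment

/-- For every integer `d ≥ 2`, every `d×d` Hermitian matrix `H`, and every
`d×d` density matrix `ρ`, the Haar variance of the mean energy is
`∫ (Tr[U ρ U† H] − Tr[H]/d)² dμ = (1/(d²−1)) (Tr[H²] − Tr[H]²/d) (Tr[ρ²] − 1/d)`. -/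
theorem haar_variance_mean_energy (d : ℕ) (hd : 2 ≤ d)
    (μ : Measure (Matrix.unitaryGroup (Fin d) ℂ))
    [μ.IsHaarMeasure] [IsProbabilityMeasure μ]
    (H ρ : Matrix (Fin d) (Fin d) ℂ) (hH : H.IsHermitian)
    (hρ : ρ.PosSemidef) (hρtr : ρ.trace = 1) :
    (∫ U : Matrix.unitaryGroup (Fin d) ℂ,
        (((U : Matrix (Fin d) (Fin d) ℂ) * ρ * star (U : Matrix (Fin d) (Fin d) ℂ) * H).trace
          - H.trace / d) ^ 2 ∂μ)
      = (1 / ((d : ℂ) ^ 2 - 1)) * ((H * H).trace - H.trace ^ 2 / d)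
          * ((ρ * ρ).trace - 1 / d) := by
  have : Nontrivial (Fin d) := Fin.nontrivial_iff_two_le.mpr hd
  simpa [hρtr] using haar_variance_mean_energy_general μ H ρ
end

section
/- For all integers d, p ≥ 1, every d×d Hermitian matrix H, and every unit vector ψ ∈ ℂ^d, the p-th Haar moment of the mean energy of a pure state admits the exact formula ∫_{U(d)} (Tr[U |ψ⟩⟨ψ| U† H])^p dμ_Haar(U) = ((d−1)!/(p+d−1)!) · Σ_{τ ∈ S_p} H[τ], where the sum runs over all permutations τ of {1,…,p} and H[τ] := ∏_{j=1}^{c(τ)} Tr[H^{α_j}] with α_1,…,α_{c(τ)} the cycle lengths of τ. -/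
open MeasureTheory Matrix
open scoped ComplexOrder

/-- The multiset of cycle lengths of a permutation, **including** fixed points
(which count as cycles of length `1`). -/
noncomputable def cycleLengths {p : ℕ} (τ : Equiv.Perm (Fin p)) : Multiset ℕ :=
  τ.cycleType + Multiset.replicate (Finset.univ.filter fun x => τ x = x).card 1

/-- `Θ[τ] := ∏_{j=1}^{c(τ)} Tr[Θ^{α_j}]`, product over the cycle lengths of `τ`. -/
noncomputable def permTraceProd {d p : ℕ} (Θ : Matrix (Fin d) (Fin d) ℂ)
    (τ : Equiv.Perm (Fin p)) : ℂ :=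
  ((cycleLengths τ).map fun a => (Θ ^ a).trace).prod

/-!
The standard complex Gaussian vector has a uniformly distributed direction, so averaging
`(star z ⬝ᵥ A *ᵥ z) ^ p * exp (-|z|²)` over `U(n) × ℂⁿ` in both orders shows that its integral over
`ℂⁿ` is the Haar moment times `∫ |z|^(2p) * exp (-|z|²)`. Wick's formula evaluates the Gaussian
integral as `π ^ n * ∑ τ, Tr (P_τ A^{⊗p})`, and every such trace factors over the cycles of `τ`.
The radial moment is the case `A = 1`, where the sum over permutations is `n (n + 1) ⋯ (n + p - 1)`.
-/

section Perm

variable {α β : Type*} [Fintype α] [Fintype β] [DecidableEq α] [DecidableEq β]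

theorem cycleType_sumCongr (σ : Equiv.Perm α) (τ : Equiv.Perm β) :
    (σ.sumCongr τ).cycleType = σ.cycleType + τ.cycleType := by
  classical
  have hl : σ.extendDomain (.ofInjective Sum.inl Sum.inl_injective) =
      σ.sumCongr (1 : Equiv.Perm β) := by
    ext (a | b)
    · exact Equiv.Perm.extendDomain_apply_image σ (.ofInjective Sum.inl Sum.inl_injective) a
    · exact Equiv.Perm.extendDomain_apply_not_subtype _ _ (by simp)
  have hr : τ.extendDomain (.ofInjective Sum.inr Sum.inr_injective) =
      (1 : Equiv.Perm α).sumCongr τ := by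
    ext (a | b)
    · exact Equiv.Perm.extendDomain_apply_not_subtype _ _ (by simp)
    · exact Equiv.Perm.extendDomain_apply_image τ (.ofInjective Sum.inr Sum.inr_injective) b
  have hdisj : (σ.sumCongr (1 : Equiv.Perm β)).Disjoint ((1 : Equiv.Perm α).sumCongr τ) := by
    rintro (a | b)
    · exact .inr rfl
    · exact .inl rfl
  calc (σ.sumCongr τ).cycleType
      = (σ.sumCongr (1 : Equiv.Perm β) * (1 : Equiv.Perm α).sumCongr τ).cycleType := by
        rw [Equiv.Perm.sumCongr_mul, mul_one, one_mul]
    _ = σ.cycleType + τ.cycleType := by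
        rw [hdisj.cycleType_mul, ← hl, ← hr, Equiv.Perm.cycleType_extendDomain,
          Equiv.Perm.cycleType_extendDomain]

theorem parts_partition_sumCongr (σ : Equiv.Perm α) (τ : Equiv.Perm β) :
    (σ.sumCongr τ).partition.parts
      = σ.partition.parts + τ.partition.parts := by
  have hσ := σ.support.card_le_univ
  have hτ := τ.support.card_le_univ
  have hfix : Fintype.card (α ⊕ β) - (σ.support.card + τ.support.card)
      = (Fintype.card α - σ.support.card) + (Fintype.card β - τ.support.card) := by
    rw [Fintype.card_sum]
    omega
  simp only [Equiv.Perm.parts_partition, ← Equiv.Perm.sum_cycleType, cycleType_sumCongr,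
    Multiset.sum_add] at hfix ⊢
  rw [hfix, Multiset.replicate_add, add_add_add_comm]

theorem parts_partition_finRotate (m : ℕ) :
    (finRotate (m + 1)).partition.parts = {m + 1} := by
  cases m with
  | zero =>
    have : finRotate (0 + 1) = 1 := Equiv.ext fun k => Subsingleton.elim (α := Fin 1) _ _
    simp [Equiv.Perm.parts_partition, this]
  | succ m => simp [Equiv.Perm.parts_partition, cycleType_finRotate]

theorem parts_partition_permCongr (e : α ≃ β) (σ : Equiv.Perm α) :
    (Equiv.Perm.partition (e.permCongr σ)).parts = σ.partition.parts := by
  let f : α ≃ {_b : β // True} := e.trans (Equiv.subtypeUnivEquiv fun _ => trivial).symm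
  have hf : σ.extendDomain f = e.permCongr σ := Equiv.ext fun _ => by
    rw [Equiv.Perm.extendDomain_apply_subtype _ _ trivial]
    rfl
  rw [Equiv.Perm.parts_partition, Equiv.Perm.parts_partition, ← hf,
    Equiv.Perm.cycleType_extendDomain, Equiv.Perm.card_support_extend_domain, Fintype.card_congr e]

end Perm

section TensorPowerTrace

variable {α β n R : Type*} [Fintype α] [Fintype β] [Fintype n] [CommSemiring R]

/-- The trace of `A ^ ⊗α` composed with the operator permuting the tensor factors by `σ`, written
out in coordinates. -/
def tensorPowerTrace [DecidableEq α] (A : Matrix n n R) (σ : Equiv.Perm α) : R :=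
  ∑ i : α → n, ∏ k, A (i k) (i (σ k))

variable [DecidableEq α] [DecidableEq β]

theorem tensorPowerTrace_permCongr (e : α ≃ β) (A : Matrix n n R) (σ : Equiv.Perm α) :
    tensorPowerTrace A (e.permCongr σ) = tensorPowerTrace A σ := by
  refine Fintype.sum_equiv (e.arrowCongr (.refl n)).symm _ _ fun i => ?_
  exact Fintype.prod_equiv e.symm _ _ fun k => by simp

theorem tensorPowerTrace_eq_of_isConj (A : Matrix n n R) {σ τ : Equiv.Perm α} (h : IsConj σ τ) :
    tensorPowerTrace A σ = tensorPowerTrace A τ := by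
  obtain ⟨c, rfl⟩ := isConj_iff.1 h
  exact (tensorPowerTrace_permCongr c A σ).symm

theorem tensorPowerTrace_sumCongr (A : Matrix n n R) (σ : Equiv.Perm α) (τ : Equiv.Perm β) :
    tensorPowerTrace A (σ.sumCongr τ) = tensorPowerTrace A σ * tensorPowerTrace A τ := by
  simp only [tensorPowerTrace, Fintype.sum_mul_sum, ← Fintype.sum_prod_type',
    Fintype.prod_sum_type]
  exact Fintype.sum_equiv (Equiv.sumArrowEquivProdArrow α β n) _ _ fun i => rfl

theorem tensorPowerTrace_of_isEmpty [IsEmpty α] (A : Matrix n n R) (σ : Equiv.Perm α) :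
    tensorPowerTrace A σ = 1 := by
  simp [tensorPowerTrace]

theorem tensorPowerTrace_congr_parts (A : Matrix n n R) {σ : Equiv.Perm α} {τ : Equiv.Perm β}
    (h : σ.partition.parts = τ.partition.parts) :
    tensorPowerTrace A σ = tensorPowerTrace A τ := by
  have hcard : Fintype.card α = Fintype.card β := by
    rw [← σ.partition.parts_sum, h, τ.partition.parts_sum]
  obtain ⟨e⟩ := Fintype.card_eq.1 hcard
  rw [← tensorPowerTrace_permCongr e]
  apply tensorPowerTrace_eq_of_isConj
  rw [Equiv.Perm.partition_eq_of_isConj, Nat.Partition.ext_iff, parts_partition_permCongr, h]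

variable [DecidableEq n]

theorem sum_prod_path_mul_eq_trace_pow_mul (A B : Matrix n n R) (m : ℕ) :
    ∑ i : Fin (m + 1) → n,
        (∏ k : Fin m, A (i k.castSucc) (i k.succ)) * B (i (Fin.last m)) (i 0)
      = (A ^ m * B).trace := by
  induction m generalizing B with
  | zero =>
    simp [trace, ← (Equiv.funUnique (Fin 1) n).sum_comp]
  | succ m ih =>
    rw [pow_succ', mul_assoc, trace_mul_comm, mul_assoc, ← ih,
      ← (Fin.consEquiv fun _ => n).sum_comp, Fintype.sum_prod_type_right]
    refine Finset.sum_congr rfl fun i _ => ?_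
    simp only [Fin.consEquiv_apply, Fin.prod_univ_succ, Fin.castSucc_zero, Fin.cons_zero,
      Fin.cons_succ, ← Fin.succ_castSucc, ← Fin.succ_last, mul_apply, Finset.mul_sum]
    exact Finset.sum_congr rfl fun a _ => by ring

theorem tensorPowerTrace_finRotate (A : Matrix n n R) (m : ℕ) :
    tensorPowerTrace A (finRotate (m + 1)) = (A ^ (m + 1)).trace := by
  rw [pow_succ, ← sum_prod_path_mul_eq_trace_pow_mul]
  simp only [tensorPowerTrace, Fin.prod_univ_castSucc, finRotate_last]
  simp

theorem exists_perm_parts_partition_eq_and_tensorPowerTrace_eq (A : Matrix n n R)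
    (s : Multiset ℕ) (hs : ∀ m ∈ s, 0 < m) :
    ∃ (γ : Type) (_ : Fintype γ) (_ : DecidableEq γ) (σ : Equiv.Perm γ),
      σ.partition.parts = s ∧ tensorPowerTrace A σ = (s.map fun m => (A ^ m).trace).prod := by
  induction s using Multiset.induction with
  | empty => exact ⟨Empty, inferInstance, inferInstance, 1, by simp [Equiv.Perm.parts_partition],
      by simp [tensorPowerTrace_of_isEmpty]⟩
  | cons m s ih =>
    rw [Multiset.forall_mem_cons] at hs
    obtain ⟨γ, _, _, σ, hparts, htrace⟩ := ih hs.2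
    obtain ⟨m, rfl⟩ := Nat.exists_eq_succ_of_ne_zero hs.1.ne'
    refine ⟨Fin (m + 1) ⊕ γ, inferInstance, inferInstance,
      (finRotate (m + 1)).sumCongr σ, ?_, ?_⟩
    · rw [parts_partition_sumCongr, parts_partition_finRotate, hparts, Multiset.singleton_add]
    · rw [tensorPowerTrace_sumCongr, tensorPowerTrace_finRotate, htrace,
        Multiset.map_cons, Multiset.prod_cons]

theorem tensorPowerTrace_eq_prod_trace_pow (A : Matrix n n R) (σ : Equiv.Perm α) :
    tensorPowerTrace A σ = (σ.partition.parts.map fun m => (A ^ m).trace).prod := by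
  obtain ⟨γ, _, _, τ, hparts, htrace⟩ :=
    exists_perm_parts_partition_eq_and_tensorPowerTrace_eq A σ.partition.parts
      fun _ => σ.partition.parts_pos
  rw [← htrace, tensorPowerTrace_congr_parts A hparts.symm]

end TensorPowerTrace

section Coloring

open Finset
open scoped Nat

variable {α β n : Type*}

/-- Equivalences intertwining two colourings are families of equivalences between the colour classes
of each colour. -/
def compEqEquivPiFiberEquiv (f : α → n) (g : β → n) :
    {e : α ≃ β // g ∘ e = f} ≃ ∀ a, ({k // f k = a} ≃ {k // g k = a}) where
  toFun e a := e.1.subtypeEquiv fun k => by simp [← congrFun e.2 k]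
  invFun E := ⟨.ofFiberEquiv E, funext (Equiv.ofFiberEquiv_map E)⟩
  left_inv e := by ext k; rfl
  right_inv E := by
    ext a ⟨k, rfl⟩; rfl

variable [Fintype α] [DecidableEq α] [Fintype n] [DecidableEq n]

theorem card_perm_comp_eq (f g : α → n) :
    #{τ : Equiv.Perm α | f ∘ τ = g} =
      ∏ a, if #{k | f k = a} = #{k | g k = a} then (#{k | f k = a})! else 0 := by
  rw [← Fintype.card_subtype, Fintype.card_congr (compEqEquivPiFiberEquiv g f), Fintype.card_pi]
  refine prod_congr rfl fun a _ => ?_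
  rw [← Fintype.card_subtype, ← Fintype.card_subtype]
  split_ifs with h
  · rw [h]
    exact Fintype.card_equiv (Fintype.equivOfCardEq h.symm)
  · rw [Fintype.card_eq_zero_iff]
    exact ⟨fun e => h (Fintype.card_congr e).symm⟩

theorem sum_prod_factorial_card_fiber (p : ℕ) :
    ∑ f : Fin p → n, ∏ a, (#{k | f k = a})! = (Fintype.card n).ascFactorial p := by
  induction p with
  | zero => simp
  | succ p ih =>
    have card_cons (b : n) (f : Fin p → n) (a : n) :
        #{k | (Fin.cons b f : Fin (p + 1) → n) k = a}
          = (if b = a then 1 else 0) + #{k | f k = a} := by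
      simp only [card_filter, Fin.sum_univ_succ, Fin.cons_zero, Fin.cons_succ]
    have prod_cons (b : n) (f : Fin p → n) :
        ∏ a, (#{k | (Fin.cons b f : Fin (p + 1) → n) k = a})!
          = (#{k | f k = b} + 1) * ∏ a, (#{k | f k = a})! := by
      rw [← mul_prod_erase _ _ (mem_univ b), ← mul_prod_erase _ _ (mem_univ b), card_cons,
        if_pos rfl, add_comm 1, Nat.factorial_succ, mul_assoc]
      congr 2
      refine prod_congr rfl fun a ha => ?_
      rw [card_cons, if_neg (ne_of_mem_erase ha).symm, zero_add]
    have sum_card (f : Fin p → n) : ∑ b, (#{k | f k = b} + 1) = Fintype.card n + p := by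
      rw [sum_add_distrib, ← card_eq_sum_card_fiberwise fun _ _ => mem_coe.2 (mem_univ _)]
      simp [add_comm]
    calc ∑ f : Fin (p + 1) → n, ∏ a, (#{k | f k = a})!
        = ∑ f : Fin p → n, (∑ b, (#{k | f k = b} + 1)) * ∏ a, (#{k | f k = a})! := by
          rw [← (Fin.consEquiv fun _ => n).sum_comp, Fintype.sum_prod_type_right]
          simp only [Fin.consEquiv_apply, prod_cons, sum_mul]
      _ = (Fintype.card n).ascFactorial (p + 1) := by
          simp only [sum_card, ← mul_sum, ih, Nat.ascFactorial_succ]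

end Coloring

section ComplexGaussian

open Finset
open scoped Nat

theorem integral_norm_pow_mul_exp_neg_norm_sq (m : ℕ) :
    ∫ z : ℂ, ‖z‖ ^ m * Real.exp (-‖z‖ ^ 2) = Real.pi * Real.Gamma (m / 2 + 1) := by
  have h := Complex.integral_rpow_mul_exp_neg_rpow (p := 2) (q := m) one_le_two
    (by linarith [m.cast_nonneg (α := ℝ)])
  simp only [Real.rpow_natCast, Real.rpow_ofNat] at h
  rw [h]
  ring_nf

theorem integrable_norm_pow_mul_exp_neg_norm_sq (m : ℕ) :
    Integrable fun z : ℂ => ‖z‖ ^ m * Real.exp (-‖z‖ ^ 2) := by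
  refine .of_integral_ne_zero ?_
  rw [integral_norm_pow_mul_exp_neg_norm_sq]
  have := Real.Gamma_pos_of_pos (s := m / 2 + 1) (by positivity)
  positivity

theorem integrable_star_pow_mul_pow_mul_exp_neg_norm_sq (m k : ℕ) :
    Integrable fun z : ℂ => star z ^ m * z ^ k * Real.exp (-‖z‖ ^ 2) := by
  refine (integrable_norm_pow_mul_exp_neg_norm_sq (m + k)).mono' ?_ (.of_forall fun z => ?_)
  · exact Continuous.aestronglyMeasurable (by fun_prop)
  · rw [norm_mul, norm_mul, norm_pow, norm_pow, norm_star, Complex.norm_real,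
      Real.norm_eq_abs, Real.abs_exp, pow_add]

theorem integral_star_pow_mul_pow_mul_exp_neg_norm_sq (m k : ℕ) :
    ∫ z : ℂ, star z ^ m * z ^ k * Real.exp (-‖z‖ ^ 2)
      = if m = k then (Real.pi * (m ! : ℝ) : ℂ) else 0 := by
  split_ifs with h
  · subst h
    have hnorm (z : ℂ) : star z ^ m * z ^ m * Real.exp (-‖z‖ ^ 2)
        = ((‖z‖ ^ (2 * m) * Real.exp (-‖z‖ ^ 2) : ℝ) : ℂ) := by
      rw [← mul_pow, ← starRingEnd_apply, Complex.conj_mul', pow_mul]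
      push_cast
      rfl
    simp only [hnorm]
    rw [integral_complex_ofReal, integral_norm_pow_mul_exp_neg_norm_sq, Nat.cast_mul,
      Nat.cast_ofNat, mul_div_cancel_left₀ _ two_ne_zero, Real.Gamma_nat_eq_factorial]
    push_cast
    rfl
  · set I := ∫ z : ℂ, star z ^ m * z ^ k * Real.exp (-‖z‖ ^ 2)
    -- Rotating by `u` multiplies the integrand by `u ^ (k - m) = -1`.
    let u := Circle.exp (Real.pi / ((k : ℝ) - m))
    have hu : star (u : ℂ) ^ m * (u : ℂ) ^ k = -1 := by
      have hkm : (k : ℂ) - m ≠ 0 := sub_ne_zero.2 (by exact_mod_cast Ne.symm h)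
      rw [← starRingEnd_apply, Circle.coe_exp, ← Complex.exp_conj, ← Complex.exp_nat_mul,
        ← Complex.exp_nat_mul, ← Complex.exp_add, ← Complex.exp_pi_mul_I]
      congr 1
      simp only [Complex.ofReal_div, Complex.ofReal_sub, Complex.ofReal_natCast, map_mul, map_div₀,
        map_sub, Complex.conj_ofReal, Complex.conj_I, map_natCast]
      field_simp
      ring
    have hrot : I = -I :=
      calc I = ∫ z : ℂ, star (rotation u z) ^ m * rotation u z ^ k
                * Real.exp (-‖rotation u z‖ ^ 2) :=
            ((rotation u).measurePreserving.integral_comp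
              (rotation u).toHomeomorph.measurableEmbedding _).symm
        _ = ∫ z : ℂ, -(star z ^ m * z ^ k * Real.exp (-‖z‖ ^ 2)) := by
            refine integral_congr_ae (.of_forall fun z => ?_)
            simp only [LinearIsometryEquiv.norm_map]
            rw [rotation_apply, star_mul', mul_pow, mul_pow]
            linear_combination (star z ^ m * z ^ k * (Real.exp (-‖z‖ ^ 2) : ℂ)) * hu
        _ = -I := integral_neg _
    exact self_eq_neg.1 hrot

variable {n : Type*} [Fintype n]

/-- The squared Euclidean norm of a vector; the norm on `n → ℂ` in Mathlib is the sup norm. -/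
noncomputable def euclideanNormSq (z : n → ℂ) : ℝ :=
  ∑ a, ‖z a‖ ^ 2

/-- The unnormalised standard complex Gaussian density, of total mass `π ^ card n`. -/
noncomputable def gaussianWeight (z : n → ℂ) : ℝ :=
  Real.exp (-euclideanNormSq z)

theorem continuous_euclideanNormSq : Continuous (euclideanNormSq (n := n)) := by
  unfold euclideanNormSq
  fun_prop

theorem continuous_gaussianWeight : Continuous (gaussianWeight (n := n)) :=
  Real.continuous_exp.comp continuous_euclideanNormSq.neg

theorem euclideanNormSq_smul (c : ℂ) (z : n → ℂ) :
    euclideanNormSq (c • z) = ‖c‖ ^ 2 * euclideanNormSq z := by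
  simp only [euclideanNormSq, Pi.smul_apply, norm_smul, mul_pow, mul_sum]

theorem star_dotProduct_self (z : n → ℂ) : star z ⬝ᵥ z = euclideanNormSq z := by
  simp [euclideanNormSq, dotProduct, Complex.conj_mul']

theorem prod_star_mul_mul_gaussianWeight {α : Type*} [Fintype α] [DecidableEq n]
    (f g : α → n) (z : n → ℂ) :
    (∏ k, star (z (f k)) * z (g k)) * gaussianWeight z
      = ∏ a, star (z a) ^ #{k | f k = a} * z a ^ #{k | g k = a} * Real.exp (-‖z a‖ ^ 2) := by
  have prod_fiber (h : α → n) (w : n → ℂ) : ∏ k, w (h k) = ∏ a, w a ^ #{k | h k = a} := by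
    rw [← prod_fiberwise univ h]
    exact prod_congr rfl fun a _ => prod_eq_pow_card fun k hk => by rw [(mem_filter.1 hk).2]
  rw [prod_mul_distrib, prod_fiber f fun a => star (z a), prod_fiber g z, gaussianWeight,
    euclideanNormSq, ← sum_neg_distrib, Real.exp_sum, Complex.ofReal_prod, ← prod_mul_distrib,
    ← prod_mul_distrib]

theorem integrable_prod_star_mul_mul_gaussianWeight {α : Type*} [Fintype α] (f g : α → n) :
    Integrable fun z : n → ℂ => (∏ k, star (z (f k)) * z (g k)) * gaussianWeight z := by
  classical
  simp only [prod_star_mul_mul_gaussianWeight]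
  exact .fintype_prod (f := fun a (w : ℂ) =>
    star w ^ #{k | f k = a} * w ^ #{k | g k = a} * (Real.exp (-‖w‖ ^ 2) : ℂ)) fun a =>
      integrable_star_pow_mul_pow_mul_exp_neg_norm_sq _ _

theorem integral_prod_star_mul_mul_gaussianWeight {α : Type*} [Fintype α] [DecidableEq α]
    [DecidableEq n] (f g : α → n) :
    ∫ z : n → ℂ, (∏ k, star (z (f k)) * z (g k)) * gaussianWeight z
      = Real.pi ^ Fintype.card n * #{τ : Equiv.Perm α | f ∘ τ = g} := by
  simp only [prod_star_mul_mul_gaussianWeight]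
  rw [integral_fintype_prod_volume_eq_prod fun a (w : ℂ) =>
    star w ^ #{k | f k = a} * w ^ #{k | g k = a} * (Real.exp (-‖w‖ ^ 2) : ℂ)]
  simp only [integral_star_pow_mul_pow_mul_exp_neg_norm_sq]
  rw [card_perm_comp_eq, Nat.cast_prod, Fintype.card, ← prod_const, ← prod_mul_distrib]
  refine prod_congr rfl fun a _ => ?_
  split_ifs with h <;> simp [h]

theorem dotProduct_mulVec_pow {R : Type*} [CommSemiring R] (A : Matrix n n R) (x y : n → R)
    (p : ℕ) :
    (x ⬝ᵥ A *ᵥ y) ^ p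
      = ∑ f : Fin p → n, ∑ g : Fin p → n, (∏ k, A (f k) (g k)) * ∏ k, x (f k) * y (g k) := by
  classical
  have hsum : x ⬝ᵥ A *ᵥ y = ∑ q : n × n, A q.1 q.2 * (x q.1 * y q.2) := by
    simp only [dotProduct, mulVec, Fintype.sum_prod_type, mul_sum]
    exact sum_congr rfl fun a _ => sum_congr rfl fun b _ => by ring
  rw [hsum, sum_pow', Fintype.piFinset_univ, ← Fintype.sum_prod_type',
    ← (Equiv.arrowProdEquivProdArrow (Fin p) (fun _ => n) (fun _ => n)).symm.sum_comp]
  simp only [prod_mul_distrib]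
  rfl

theorem integrable_star_dotProduct_mulVec_pow_mul_gaussianWeight (A : Matrix n n ℂ) (p : ℕ) :
    Integrable fun z : n → ℂ => (star z ⬝ᵥ A *ᵥ z) ^ p * gaussianWeight z := by
  simp only [dotProduct_mulVec_pow, Pi.star_apply, sum_mul, mul_assoc]
  exact integrable_finsetSum _ fun f _ => integrable_finsetSum _ fun g _ =>
    (integrable_prod_star_mul_mul_gaussianWeight f g).const_mul _

theorem integral_star_dotProduct_mulVec_pow_mul_gaussianWeight (A : Matrix n n ℂ) (p : ℕ) :
    ∫ z : n → ℂ, (star z ⬝ᵥ A *ᵥ z) ^ p * gaussianWeight z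
      = Real.pi ^ Fintype.card n * ∑ τ : Equiv.Perm (Fin p), tensorPowerTrace A τ := by
  classical
  have hint (f g : Fin p → n) : Integrable fun z : n → ℂ =>
      (∏ k, A (f k) (g k)) * ((∏ k, star (z (f k)) * z (g k)) * gaussianWeight z) :=
    (integrable_prod_star_mul_mul_gaussianWeight f g).const_mul _
  calc ∫ z : n → ℂ, (star z ⬝ᵥ A *ᵥ z) ^ p * gaussianWeight z
      = ∑ f : Fin p → n, ∑ g : Fin p → n, (∏ k, A (f k) (g k)) *
          (Real.pi ^ Fintype.card n * #{τ : Equiv.Perm (Fin p) | f ∘ τ = g}) := by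
        simp only [dotProduct_mulVec_pow, Pi.star_apply, sum_mul, mul_assoc]
        rw [integral_finsetSum _ fun f _ => integrable_finsetSum _ fun g _ => hint f g]
        refine sum_congr rfl fun f _ => ?_
        rw [integral_finsetSum _ fun g _ => hint f g]
        simp only [integral_const_mul, integral_prod_star_mul_mul_gaussianWeight]
    _ = Real.pi ^ Fintype.card n * ∑ f : Fin p → n, ∑ τ : Equiv.Perm (Fin p), ∑ g : Fin p → n,
          if f ∘ τ = g then ∏ k, A (f k) (g k) else 0 := by
        rw [mul_sum]
        refine sum_congr rfl fun f _ => ?_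
        rw [sum_comm, mul_sum]
        refine sum_congr rfl fun g _ => ?_
        rw [← sum_filter, sum_const, nsmul_eq_mul]
        ring
    _ = Real.pi ^ Fintype.card n * ∑ τ : Equiv.Perm (Fin p), tensorPowerTrace A τ := by
        rw [sum_comm]
        simp [tensorPowerTrace]

theorem sum_tensorPowerTrace_one (R : Type*) [CommSemiring R] [DecidableEq n] (p : ℕ) :
    ∑ τ : Equiv.Perm (Fin p), tensorPowerTrace (1 : Matrix n n R) τ
      = (Fintype.card n).ascFactorial p := by
  have hprod (f : Fin p → n) (τ : Equiv.Perm (Fin p)) :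
      ∏ k, (1 : Matrix n n R) (f k) (f (τ k)) = if f ∘ τ = f then 1 else 0 := by
    simp [one_apply, prod_ite_zero, funext_iff, eq_comm]
  simp only [tensorPowerTrace, hprod]
  rw [sum_comm, ← sum_prod_factorial_card_fiber, Nat.cast_sum]
  refine sum_congr rfl fun f _ => ?_
  rw [sum_boole, card_perm_comp_eq]
  simp

theorem integral_euclideanNormSq_pow_mul_gaussianWeight (p : ℕ) :
    ∫ z : n → ℂ, (euclideanNormSq z : ℂ) ^ p * gaussianWeight z
      = Real.pi ^ Fintype.card n * (Fintype.card n).ascFactorial p := by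
  classical
  rw [← sum_tensorPowerTrace_one, ← integral_star_dotProduct_mulVec_pow_mul_gaussianWeight]
  simp only [one_mulVec, star_dotProduct_self]

end ComplexGaussian

section UnitaryAction

variable {n : Type*} [Fintype n]

theorem exists_linearIsometryEquiv_apply_eq {𝕜 E : Type*} [RCLike 𝕜] [NormedAddCommGroup E]
    [InnerProductSpace 𝕜 E] [FiniteDimensional 𝕜 E] {x y : E} (h : ‖x‖ = ‖y‖) :
    ∃ e : E ≃ₗᵢ[𝕜] E, e x = y := by
  rcases eq_or_ne x 0 with rfl | hx
  · exact ⟨.refl 𝕜 E, (norm_eq_zero.1 (h ▸ norm_zero)).symm⟩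
  have hx' : ‖x‖ ≠ 0 := norm_ne_zero_iff.2 hx
  have : Nontrivial E := ⟨x, 0, hx⟩
  let i : Fin (Module.finrank 𝕜 E) := ⟨0, Module.finrank_pos⟩
  have exists_basis {v : E} (hv : ‖v‖ = ‖x‖) :
      ∃ b : OrthonormalBasis (Fin (Module.finrank 𝕜 E)) 𝕜 E, v = (‖x‖ : 𝕜) • b i := by
    have horth : Orthonormal 𝕜 (Set.domRestrict {i} fun _ => (‖x‖ : 𝕜)⁻¹ • v) :=
      ⟨fun _ => by simp [Set.domRestrict, norm_smul, hv, hx'],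
        fun j k hjk => (hjk (Subsingleton.elim j k)).elim⟩
    obtain ⟨b, hb⟩ := horth.exists_orthonormalBasis_extension_of_card_eq (by simp)
    exact ⟨b, by rw [hb i rfl, smul_inv_smul₀ (by simpa using hx)]⟩
  obtain ⟨b, hb⟩ := exists_basis rfl
  obtain ⟨b', hb'⟩ := exists_basis h.symm
  refine ⟨b.equiv b' (.refl _), ?_⟩
  nth_rw 1 [hb]
  rw [map_smul, OrthonormalBasis.equiv_apply_basis, Equiv.refl_apply, ← hb']

theorem trace_mul_vecMulVec_mul_star_mul {R : Type*} [CommSemiring R] [StarRing R]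
    (U A : Matrix n n R) (ψ : n → R) :
    (U * vecMulVec ψ (star ψ) * star U * A).trace = star (U *ᵥ ψ) ⬝ᵥ A *ᵥ U *ᵥ ψ := by
  rw [mul_vecMulVec, vecMulVec_mul, vecMulVec_mul, trace_vecMulVec, star_eq_conjTranspose,
    ← star_mulVec, dotProduct_mulVec, dotProduct_comm]

theorem measurePreserving_mulVec_of_norm_det_eq_one [DecidableEq n] {A : Matrix n n ℂ}
    (hA : ‖A.det‖ = 1) : MeasurePreserving fun z : n → ℂ => A *ᵥ z := by
  let f : (n → ℂ) →ₗ[ℝ] n → ℂ := (toLin' A).restrictScalars ℝ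
  have hdet : LinearMap.det f = 1 := by
    rw [LinearMap.det_restrictScalars, LinearMap.det_toLin', Algebra.norm_complex_eq]
    simp [Complex.normSq_eq_norm_sq, hA]
  refine ⟨(by fun_prop : Continuous fun z : n → ℂ => A *ᵥ z).measurable, ?_⟩
  change Measure.map f volume = volume
  rw [Measure.map_linearMap_addHaar_eq_smul_addHaar _ (hdet ▸ one_ne_zero), hdet]
  simp

theorem norm_star_dotProduct_mulVec_le (A : Matrix n n ℂ) (z : n → ℂ) :
    ‖star z ⬝ᵥ A *ᵥ z‖ ≤ (∑ i, ∑ j, ‖A i j‖) * euclideanNormSq z := by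
  simp only [dotProduct, mulVec, Finset.mul_sum, Finset.sum_mul, Pi.star_apply]
  have norm_mul_norm_le (i j : n) : ‖z i‖ * ‖z j‖ ≤ euclideanNormSq z := by
    have hle (k : n) : ‖z k‖ ^ 2 ≤ euclideanNormSq z :=
      Finset.single_le_sum (f := fun k => ‖z k‖ ^ 2) (fun _ _ => sq_nonneg _) (Finset.mem_univ k)
    nlinarith [hle i, hle j, sq_nonneg (‖z i‖ - ‖z j‖)]
  refine norm_sum_le_of_le _ fun i _ => norm_sum_le_of_le _ fun j _ => ?_
  rw [norm_mul, norm_mul, norm_star, mul_left_comm]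
  gcongr
  exact norm_mul_norm_le i j

theorem isMulRightInvariant_of_isHaarMeasure_of_isProbabilityMeasure {G : Type*} [Group G]
    [TopologicalSpace G] [IsTopologicalGroup G] [LocallyCompactSpace G] [MeasurableSpace G]
    [BorelSpace G] (μ : Measure G) [μ.IsHaarMeasure] [IsProbabilityMeasure μ] :
    μ.IsMulRightInvariant where
  map_mul_right_eq_self g := by
    have := Measure.isProbabilityMeasure_map (μ := μ) (measurable_mul_const g).aemeasurable
    exact Measure.isHaarMeasure_eq_of_isProbabilityMeasure _ _

variable [DecidableEq n]

theorem locallyCompactSpace_unitaryGroup : LocallyCompactSpace (unitaryGroup n ℂ) := by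
  have : LocallyCompactSpace (Matrix n n ℂ) := inferInstanceAs (LocallyCompactSpace (n → n → ℂ))
  exact (isClosed_unitary (R := Matrix n n ℂ)).isClosedEmbedding_subtypeVal.locallyCompactSpace

theorem measurePreserving_unitaryGroup_mulVec (U : unitaryGroup n ℂ) :
    MeasurePreserving fun z : n → ℂ => (U : Matrix n n ℂ) *ᵥ z :=
  measurePreserving_mulVec_of_norm_det_eq_one
    (CStarRing.norm_of_mem_unitary (det_of_mem_unitary U.2))

theorem euclideanNormSq_mulVec (U : unitaryGroup n ℂ) (z : n → ℂ) :
    euclideanNormSq ((U : Matrix n n ℂ) *ᵥ z) = euclideanNormSq z := by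
  apply Complex.ofReal_injective
  rw [← star_dotProduct_self, ← star_dotProduct_self, star_mulVec, dotProduct_mulVec, vecMul_vecMul,
    ← star_eq_conjTranspose, UnitaryGroup.star_mul_self, vecMul_one]

theorem exists_unitaryGroup_mulVec_eq {v w : n → ℂ}
    (h : euclideanNormSq v = euclideanNormSq w) :
    ∃ V : unitaryGroup n ℂ, (V : Matrix n n ℂ) *ᵥ v = w := by
  have hnorm : ‖WithLp.toLp 2 v‖ = ‖WithLp.toLp 2 w‖ := by
    simpa only [EuclideanSpace.norm_eq, euclideanNormSq] using congrArg Real.sqrt h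
  obtain ⟨e, he⟩ := exists_linearIsometryEquiv_apply_eq (𝕜 := ℂ) hnorm
  let b := EuclideanSpace.basisFun n ℂ
  have repr_eq (x : EuclideanSpace ℂ n) : ⇑(b.toBasis.repr x) = x.ofLp :=
    funext fun a => by simp [b]
  refine ⟨⟨_, e.toMatrix_mem_unitaryGroup b b⟩, ?_⟩
  simpa only [repr_eq, LinearEquiv.coe_coe, LinearIsometryEquiv.coe_toLinearEquiv, he] using
    LinearMap.toMatrix_mulVec_repr b.toBasis b.toBasis e.toLinearEquiv.toLinearMap (.toLp 2 v)

end UnitaryAction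

section HaarMoment

variable {n : Type*} [Fintype n] [DecidableEq n] [MeasurableSpace (unitaryGroup n ℂ)]
  [BorelSpace (unitaryGroup n ℂ)] (μ : Measure (unitaryGroup n ℂ)) (A : Matrix n n ℂ)
  (p : ℕ)

theorem integrable_star_dotProduct_unitaryGroup_mulVec_pow_mul_gaussianWeight [IsFiniteMeasure μ] :
    Integrable (fun x : unitaryGroup n ℂ × (n → ℂ) =>
      (star (x.1.1 *ᵥ x.2) ⬝ᵥ A *ᵥ x.1.1 *ᵥ x.2) ^ p * (gaussianWeight x.2 : ℂ))
      (μ.prod volume) := by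
  have hbound : Integrable fun z : n → ℂ =>
      (((∑ i, ∑ j, ‖A i j‖ : ℝ) : ℂ) * (star z ⬝ᵥ (1 : Matrix n n ℂ) *ᵥ z)) ^ p
        * gaussianWeight z := by
    simp only [mul_pow, mul_assoc]
    exact (integrable_star_dotProduct_mulVec_pow_mul_gaussianWeight 1 p).const_mul _
  refine (hbound.comp_snd μ).mono ?_ (.of_forall fun x => ?_)
  · have := continuous_gaussianWeight (n := n)
    exact Continuous.aestronglyMeasurable (by fun_prop)
  · rw [one_mulVec, star_dotProduct_self, norm_mul, norm_mul, norm_pow, norm_pow,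
      ← Complex.ofReal_mul]
    gcongr
    refine (norm_star_dotProduct_mulVec_le A _).trans ?_
    rw [euclideanNormSq_mulVec, Complex.norm_real]
    exact Real.le_norm_self _

variable [μ.IsHaarMeasure] [IsProbabilityMeasure μ]

theorem integral_unitaryGroup_star_dotProduct_mulVec_pow {ψ : n → ℂ} (hψ : euclideanNormSq ψ = 1)
    (z : n → ℂ) :
    ∫ U : unitaryGroup n ℂ, (star (U.1 *ᵥ z) ⬝ᵥ A *ᵥ U.1 *ᵥ z) ^ p ∂μ
      = euclideanNormSq z ^ p *
        ∫ U : unitaryGroup n ℂ, (star (U.1 *ᵥ ψ) ⬝ᵥ A *ᵥ U.1 *ᵥ ψ) ^ p ∂μ := by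
  have := locallyCompactSpace_unitaryGroup (n := n)
  have := isMulRightInvariant_of_isHaarMeasure_of_isProbabilityMeasure μ
  have hz : 0 ≤ euclideanNormSq z := Finset.sum_nonneg fun _ _ => sq_nonneg _
  obtain ⟨V, hV⟩ : ∃ V : unitaryGroup n ℂ,
      (V : Matrix n n ℂ) *ᵥ z = (√(euclideanNormSq z) : ℂ) • ψ := by
    refine exists_unitaryGroup_mulVec_eq ?_
    rw [euclideanNormSq_smul, hψ, Complex.norm_real, Real.norm_of_nonneg (Real.sqrt_nonneg _),
      Real.sq_sqrt hz, mul_one]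
  have hscale (v : n → ℂ) : star ((√(euclideanNormSq z) : ℂ) • v) ⬝ᵥ A *ᵥ
      ((√(euclideanNormSq z) : ℂ) • v) = euclideanNormSq z * (star v ⬝ᵥ A *ᵥ v) := by
    rw [mulVec_smul, star_smul, smul_dotProduct, dotProduct_smul, smul_smul, smul_eq_mul,
      ← starRingEnd_apply, Complex.conj_ofReal, ← Complex.ofReal_mul, Real.mul_self_sqrt hz]
  rw [← integral_mul_right_eq_self _ V, ← integral_const_mul]
  refine integral_congr_ae (.of_forall fun U => ?_)
  simp only
  rw [← mul_pow, ← hscale, ← mulVec_smul, UnitaryGroup.mul_val, ← mulVec_mulVec, hV]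

theorem integral_unitaryGroup_mul_integral_gaussianWeight {ψ : n → ℂ}
    (hψ : euclideanNormSq ψ = 1) :
    (∫ U : unitaryGroup n ℂ, (star (U.1 *ᵥ ψ) ⬝ᵥ A *ᵥ U.1 *ᵥ ψ) ^ p ∂μ)
        * ∫ z : n → ℂ, (euclideanNormSq z : ℂ) ^ p * gaussianWeight z
      = ∫ z : n → ℂ, (star z ⬝ᵥ A *ᵥ z) ^ p * gaussianWeight z := by
  have integral_rotate (U : unitaryGroup n ℂ) :
      ∫ z : n → ℂ, (star (U.1 *ᵥ z) ⬝ᵥ A *ᵥ U.1 *ᵥ z) ^ p * (gaussianWeight z : ℂ)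
        = ∫ z : n → ℂ, (star z ⬝ᵥ A *ᵥ z) ^ p * gaussianWeight z := by
    rw [← (measurePreserving_unitaryGroup_mulVec U).integral_comp
      (UnitaryGroup.toLinearEquiv U).toContinuousLinearEquiv.toHomeomorph.measurableEmbedding
      fun z => (star z ⬝ᵥ A *ᵥ z) ^ p * (gaussianWeight z : ℂ)]
    simp only [gaussianWeight, euclideanNormSq_mulVec]
  calc _ = ∫ z : n → ℂ, ∫ U : unitaryGroup n ℂ,
          (star (U.1 *ᵥ z) ⬝ᵥ A *ᵥ U.1 *ᵥ z) ^ p * (gaussianWeight z : ℂ) ∂μ := by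
        rw [← integral_const_mul]
        refine integral_congr_ae (.of_forall fun z => ?_)
        simp only [integral_mul_const]
        rw [integral_unitaryGroup_star_dotProduct_mulVec_pow μ A p hψ z]
        ring
    _ = ∫ U : unitaryGroup n ℂ, (∫ z : n → ℂ,
          (star (U.1 *ᵥ z) ⬝ᵥ A *ᵥ U.1 *ᵥ z) ^ p * (gaussianWeight z : ℂ)) ∂μ :=
        (integral_integral_swap
          (integrable_star_dotProduct_unitaryGroup_mulVec_pow_mul_gaussianWeight μ A p)).symm
    _ = ∫ z : n → ℂ, (star z ⬝ᵥ A *ᵥ z) ^ p * gaussianWeight z := by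
        simp only [integral_rotate, integral_const, probReal_univ, one_smul]

theorem haar_moment_pure_state_general {ψ : n → ℂ} (hψ : ∑ i, ‖ψ i‖ ^ 2 = 1) :
    ∫ U : unitaryGroup n ℂ, (U.1 * vecMulVec ψ (star ψ) * star U.1 * A).trace ^ p ∂μ
      = ((Fintype.card n - 1).factorial / (p + Fintype.card n - 1).factorial : ℂ)
        * ∑ τ : Equiv.Perm (Fin p), (τ.partition.parts.map fun a => (A ^ a).trace).prod := by
  have hcard : 0 < Fintype.card n := Fintype.card_pos_iff.2 <| not_isEmpty_iff.1 fun _ => by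
    simp at hψ
  have hfac : ((Fintype.card n - 1).factorial : ℂ) * (Fintype.card n).ascFactorial p
      = (p + Fintype.card n - 1).factorial := by
    rw [add_comm p]
    exact_mod_cast Nat.factorial_mul_ascFactorial' _ p hcard
  have hπ : (Real.pi : ℂ) ^ Fintype.card n ≠ 0 := by simp [Real.pi_ne_zero]
  have hgauss := integral_unitaryGroup_mul_integral_gaussianWeight μ A p hψ
  rw [integral_euclideanNormSq_pow_mul_gaussianWeight,
    integral_star_dotProduct_mulVec_pow_mul_gaussianWeight, mul_left_comm] at hgauss
  have hasc := mul_left_cancel₀ hπ hgauss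
  simp only [trace_mul_vecMulVec_mul_star_mul, ← tensorPowerTrace_eq_prod_trace_pow]
  rw [← hasc, div_mul_eq_mul_div, eq_div_iff (by positivity), ← hfac]
  ring

end HaarMoment

theorem cycleLengths_eq_parts_partition {p : ℕ} (τ : Equiv.Perm (Fin p)) :
    cycleLengths τ = τ.partition.parts := by
  have hfixed : (Finset.univ.filter fun x => τ x = x) = τ.supportᶜ := by
    ext
    simp
  rw [cycleLengths, Equiv.Perm.parts_partition, hfixed, Finset.card_compl]

/-- For a pure state `|ψ⟩⟨ψ|` (with `ψ` a unit vector in `ℂ^d`), the `p`-th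
Haar moment of the mean energy admits the exact formula
`∫ (Tr[U |ψ⟩⟨ψ| U† H])^p dμ = ((d−1)!/(p+d−1)!) Σ_{τ ∈ S_p} H[τ]`. -/
theorem haar_moment_pure_state (d p : ℕ) (hd : 1 ≤ d) (hp : 1 ≤ p)
    (μ : Measure (Matrix.unitaryGroup (Fin d) ℂ))
    [μ.IsHaarMeasure] [IsProbabilityMeasure μ]
    (H : Matrix (Fin d) (Fin d) ℂ) (hH : H.IsHermitian)
    (ψ : Fin d → ℂ) (hψ : ∑ i, ‖ψ i‖ ^ 2 = 1) :
    (∫ U : Matrix.unitaryGroup (Fin d) ℂ,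
        (((U : Matrix (Fin d) (Fin d) ℂ) * Matrix.vecMulVec ψ (star ψ)
            * star (U : Matrix (Fin d) (Fin d) ℂ) * H).trace) ^ p ∂μ)
      = (((d - 1).factorial : ℂ) / ((p + d - 1).factorial : ℂ))
          * ∑ τ : Equiv.Perm (Fin p), permTraceProd H τ := by
  simp only [permTraceProd, cycleLengths_eq_parts_partition]
  simpa only [Fintype.card_fin] using haar_moment_pure_state_general μ H p hψ
end

section
/- Let d ≥ 2, let H be a d×d Hermitian matrix with ΔH := H − (Tr[H]/d)·I nonzero, let ψ ∈ ℂ^d be a unit vector, and for p ∈ ℕ set Σ^(p) := ∫_{U(d)} (Tr[U |ψ⟩⟨ψ| U† H] − Tr[H]/d)^p dμ_Haar(U). Then for every odd integer p ≥ 3, |Σ^(p)| ≤ √(η_{ΔH}) · ⌈p!/e⌉ · (Tr[ΔH²])^{p/2} / (d(d+1))^{p/2}, where e is Euler's number. -/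
/-!
Write `λ` for the eigenvalues of `ΔH` and `s = √(∑ λ_i²)`. The Haar average is that of
`(∑ λ_i |φ_i|²)^p` over a random unit vector `φ`. Invariance under diagonal unitaries annihilates
every mixed moment except those of the `|φ_i|²`, and isotropy, `E|⟨v, φ⟩|^{2p} = c ‖v‖^{2p}`,
forces these to be inversely proportional to the multinomial coefficients. Hence the average is
`h_p(λ) / h_p(1)`, where `h_p` is the complete homogeneous symmetric polynomial and
`p! h_p(1) = d (d + 1) ⋯ (d + p - 1) ≥ (d (d + 1))^{p/2}`.

Differentiating `∏ 1 / (1 - λ_i t)` gives Newton's identity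
`n h_n(λ) = ∑_{k ≤ n} h_{n-k}(λ) (∑ λ_i^k)`. The term `k = 1` vanishes because `ΔH` is traceless and
`|∑ λ_i^k| ≤ s^k` otherwise, so induction along the recursion `n D_n / n! = ∑_{m ≤ n-2} D_m / m!` of
the derangement numbers gives `|h_n(λ)| ≤ s^n D_n / n!`. For odd `n` each term has an odd power sum,
worth another factor `∑ |λ_i|³ / s³ = √η`, or an odd-index `h_{n-k}`, which carries that factor by
induction. Finally `D_p ≤ p! / e` for odd `p`, as partial sums of the alternating series for `e⁻¹`.
-/

open MeasureTheory Matrix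
open scoped ComplexOrder

/-- `η_Θ := (Σ_i |λ_i|³)² / (Σ_i λ_i²)³` for a Hermitian matrix `Θ` with eigenvalues `λ_i`. -/
noncomputable def eta {d : ℕ} {Θ : Matrix (Fin d) (Fin d) ℂ} (hΘ : Θ.IsHermitian) : ℝ :=
  (∑ i, |hΘ.eigenvalues i| ^ 3) ^ 2 / (∑ i, hΘ.eigenvalues i ^ 2) ^ 3

section CompleteHomogeneous

open Finset MvPolynomial
open PowerSeries (mk derivative)

theorem derivative_mk_pow {R : Type*} [CommSemiring R] (a : R) :
    derivative R (mk (a ^ ·)) = mk (a ^ ·) * mk fun m => a ^ (m + 1) := by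
  ext n
  rw [PowerSeries.coeff_derivative, PowerSeries.coeff_mul,
    sum_congr rfl (g := fun _ => a ^ (n + 1))]
  · simp [mul_comm]
  · intro x hx
    rw [PowerSeries.coeff_mk, PowerSeries.coeff_mk, ← pow_add, ← add_assoc, mem_antidiagonal.1 hx]

theorem derivative_prod_mk_pow {ι R : Type*} [CommSemiring R] (a : ι → R) (s : Finset ι) :
    derivative R (∏ i ∈ s, mk (a i ^ ·)) =
      (∏ i ∈ s, mk (a i ^ ·)) * ∑ i ∈ s, mk fun m => a i ^ (m + 1) := by
  classical
  induction s using Finset.induction_on with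
  | empty => simp
  | insert i s hi ih =>
    rw [prod_insert hi, sum_insert hi, Derivation.leibniz, ih, derivative_mk_pow]
    simp only [smul_eq_mul]
    ring

variable (ι R : Type*) [Fintype ι] [DecidableEq ι] [CommSemiring R]

theorem hsymm_eq_sum_piAntidiag (n : ℕ) :
    hsymm ι R n = ∑ k ∈ piAntidiag univ n, ∏ i, X i ^ k i := by
  rw [← map_sym_eq_piAntidiag, sym_univ, sum_map, hsymm]
  refine sum_congr rfl fun s _ => ?_
  rw [prod_multiset_map_count]
  exact prod_subset (subset_univ _) fun i _ hi => by simp_all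

theorem prod_mk_X_pow_eq_mk_hsymm :
    ∏ i, mk ((X i : MvPolynomial ι R) ^ ·) = mk (hsymm ι R) := by
  ext1 n
  simpa [PowerSeries.coeff_prod, finsuppAntidiag, hsymm_eq_sum_piAntidiag] using
    sum_attach _ fun k : ι → ℕ => ∏ i, (X i : MvPolynomial ι R) ^ k i

theorem hsymm_succ_mul_succ (n : ℕ) :
    hsymm ι R (n + 1) * (n + 1) =
      ∑ x ∈ antidiagonal n, hsymm ι R x.1 * psum ι R (x.2 + 1) := by
  have h := congrArg (PowerSeries.coeff n)
    (derivative_prod_mk_pow (X : ι → MvPolynomial ι R) univ)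
  simpa [PowerSeries.coeff_derivative, PowerSeries.coeff_mul, prod_mk_X_pow_eq_mk_hsymm,
    psum] using h

variable {ι R}

theorem eval_hsymm (a : ι → R) (n : ℕ) :
    eval a (hsymm ι R n) = ∑ k ∈ piAntidiag univ n, ∏ i, a i ^ k i := by
  simp [hsymm_eq_sum_piAntidiag]

variable (ι R) in
theorem eval_one_hsymm (n : ℕ) :
    eval 1 (hsymm ι R n) = (Fintype.card ι).multichoose n := by
  simp [hsymm, map_multiset_prod, ← Sym.card_sym_eq_multichoose]

end CompleteHomogeneous

section Derangements

open Finset Filter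
open scoped Nat

theorem numDerangements_div_factorial (n : ℕ) :
    (numDerangements n : ℝ) / n ! = ∑ k ∈ range (n + 1), (-1) ^ k * (1 / k ! : ℝ) := by
  rw [← Int.cast_natCast, numDerangements_sum, Int.cast_sum, sum_div]
  refine sum_congr rfl fun k hk => ?_
  have h : (k ! * (k + 1).ascFactorial (n - k) : ℝ) = n ! := by
    rw [← Nat.cast_mul, Nat.factorial_mul_ascFactorial,
      Nat.add_sub_cancel' (Nat.lt_succ_iff.1 (mem_range.1 hk))]
  rw [← h]
  have := Nat.factorial_ne_zero k
  have : (k + 1).ascFactorial (n - k) ≠ 0 := (Nat.ascFactorial_pos k _).ne'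
  push_cast
  field_simp

theorem succ_mul_numDerangements_succ_div_factorial (n : ℕ) :
    ((n : ℝ) + 1) * (numDerangements (n + 1) / (n + 1)!) =
      ∑ m ∈ range n, (numDerangements m : ℝ) / m ! := by
  induction n with
  | zero => simp
  | succ n ih =>
    rw [sum_range_succ, ← ih, numDerangements_add_two]
    simp only [Nat.factorial_succ]
    push_cast
    have := Nat.factorial_ne_zero n
    field_simp
    ring

theorem numDerangements_le_factorial_div_exp {n : ℕ} (hn : Odd n) :
    (numDerangements n : ℝ) ≤ n ! / Real.exp 1 := by
  obtain ⟨k, rfl⟩ := hn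
  have hlim : Tendsto (fun n => ∑ i ∈ range n, (-1) ^ i * (1 / i ! : ℝ)) atTop
      (nhds (Real.exp (-1))) := by
    rw [← tendsto_add_atTop_iff_nat 1]
    simpa only [numDerangements_div_factorial] using numDerangements_tendsto_inv_e
  have hanti : Antitone fun i : ℕ => (1 / i ! : ℝ) := fun i j hij => by
    dsimp only
    gcongr
  have h := hanti.alternating_series_le_tendsto hlim (k + 1)
  rw [Nat.mul_succ, ← numDerangements_div_factorial, Real.exp_neg,
    div_le_iff₀' (by positivity)] at h
  rwa [div_eq_mul_inv]

end Derangements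

section PowerSumBounds

open Finset MvPolynomial
open scoped Nat

variable {ι : Type*} [Fintype ι]

theorem abs_sum_pow_add_le (a : ι → ℝ) (r n : ℕ) :
    |∑ i, a i ^ (r + n)| ≤ (∑ i, |a i| ^ r) * √(∑ i, a i ^ 2) ^ n := by
  have hle (i : ι) : |a i| ≤ √(∑ j, a j ^ 2) :=
    Real.abs_le_sqrt (single_le_sum (f := fun j => a j ^ 2) (fun _ _ => sq_nonneg _) (mem_univ i))
  calc |∑ i, a i ^ (r + n)|
      ≤ ∑ i, |a i| ^ r * |a i| ^ n := by
        simp_rw [← pow_add, ← abs_pow]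
        exact abs_sum_le_sum_abs _ _
    _ ≤ ∑ i, |a i| ^ r * √(∑ i, a i ^ 2) ^ n := by
        gcongr with i
        exact hle i
    _ = (∑ i, |a i| ^ r) * √(∑ i, a i ^ 2) ^ n := (sum_mul ..).symm

theorem abs_sum_pow_le (a : ι → ℝ) {n : ℕ} (hn : 2 ≤ n) :
    |∑ i, a i ^ n| ≤ √(∑ i, a i ^ 2) ^ n := by
  obtain ⟨n, rfl⟩ := Nat.exists_eq_add_of_le hn
  simpa only [sq_abs, pow_add, Real.sq_sqrt (sum_nonneg fun i _ => sq_nonneg (a i))]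
    using abs_sum_pow_add_le a 2 n

theorem abs_sum_pow_le_mul {a : ι → ℝ} {κ : ℝ}
    (hκ : ∑ i, |a i| ^ 3 ≤ κ * √(∑ i, a i ^ 2) ^ 3) {n : ℕ} (hn : 3 ≤ n) :
    |∑ i, a i ^ n| ≤ κ * √(∑ i, a i ^ 2) ^ n := by
  obtain ⟨n, rfl⟩ := Nat.exists_eq_add_of_le hn
  calc |∑ i, a i ^ (3 + n)|
      ≤ (∑ i, |a i| ^ 3) * √(∑ i, a i ^ 2) ^ n := abs_sum_pow_add_le a 3 n
    _ ≤ κ * √(∑ i, a i ^ 2) ^ 3 * √(∑ i, a i ^ 2) ^ n := by gcongr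
    _ = κ * √(∑ i, a i ^ 2) ^ (3 + n) := by ring

variable [DecidableEq ι]

/-- As `∑ a i = 0`, the terms left in Newton's identity are those of the derangement recursion
`succ_mul_numDerangements_succ_div_factorial`. -/
theorem abs_eval_hsymm_succ_le {a : ι → ℝ} (ha : ∑ i, a i = 0) {n : ℕ} {C : ℝ}
    (h : ∀ m k, m + k = n + 1 → 2 ≤ k →
      |eval a (hsymm ι ℝ m)| * |∑ i, a i ^ k| ≤ C * (numDerangements m / m !)) :
    |eval a (hsymm ι ℝ (n + 1))| ≤ C * (numDerangements (n + 1) / (n + 1)!) := by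
  have newton : eval a (hsymm ι ℝ (n + 1)) * (n + 1) =
      ∑ m ∈ range n, eval a (hsymm ι ℝ m) * ∑ i, a i ^ (n - m + 1) := by
    simpa [psum, Nat.sum_antidiagonal_eq_sum_range_succ_mk, sum_range_succ, ha] using
      congrArg (eval a) (hsymm_succ_mul_succ ι ℝ n)
  have hn : (0 : ℝ) < n + 1 := by positivity
  refine le_of_mul_le_mul_right ?_ hn
  calc |eval a (hsymm ι ℝ (n + 1))| * (n + 1)
      = |∑ m ∈ range n, eval a (hsymm ι ℝ m) * ∑ i, a i ^ (n - m + 1)| := by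
        rw [← newton, abs_mul, abs_of_pos hn]
    _ ≤ ∑ m ∈ range n, |eval a (hsymm ι ℝ m)| * |∑ i, a i ^ (n - m + 1)| := by
        simp only [← abs_mul]
        exact abs_sum_le_sum_abs _ _
    _ ≤ ∑ m ∈ range n, C * (numDerangements m / m !) :=
        sum_le_sum fun m hm => by
          have := mem_range.1 hm
          exact h m _ (by omega) (by omega)
    _ = C * (numDerangements (n + 1) / (n + 1)!) * (n + 1) := by
        rw [← mul_sum, ← succ_mul_numDerangements_succ_div_factorial]
        ring

theorem abs_eval_hsymm_le {a : ι → ℝ} (ha : ∑ i, a i = 0) (n : ℕ) :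
    |eval a (hsymm ι ℝ n)| ≤ √(∑ i, a i ^ 2) ^ n * (numDerangements n / n !) := by
  induction n using Nat.strong_induction_on with
  | _ n ih =>
    cases n with
    | zero => simp
    | succ n =>
      refine abs_eval_hsymm_succ_le ha fun m k hmk hk => ?_
      calc |eval a (hsymm ι ℝ m)| * |∑ i, a i ^ k|
          ≤ √(∑ i, a i ^ 2) ^ m * (numDerangements m / m !) * √(∑ i, a i ^ 2) ^ k := by
            gcongr
            · exact ih m (by omega)
            · exact abs_sum_pow_le a hk
        _ = √(∑ i, a i ^ 2) ^ (n + 1) * (numDerangements m / m !) := by rw [← hmk]; ring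

theorem abs_eval_hsymm_le_of_odd {a : ι → ℝ} (ha : ∑ i, a i = 0) {κ : ℝ}
    (hκ : ∑ i, |a i| ^ 3 ≤ κ * √(∑ i, a i ^ 2) ^ 3) {n : ℕ} (hn : Odd n) :
    |eval a (hsymm ι ℝ n)| ≤ κ * √(∑ i, a i ^ 2) ^ n * (numDerangements n / n !) := by
  induction n using Nat.strong_induction_on with
  | _ n ih =>
    obtain ⟨n, rfl⟩ := Nat.exists_eq_succ_of_ne_zero hn.pos.ne'
    refine abs_eval_hsymm_succ_le ha fun m k hmk hk => ?_
    suffices |eval a (hsymm ι ℝ m)| * |∑ i, a i ^ k| ≤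
        κ * (√(∑ i, a i ^ 2) ^ m * √(∑ i, a i ^ 2) ^ k) * (numDerangements m / m !) by
      rwa [← pow_add, hmk] at this
    rcases Nat.even_or_odd m with hm | hm
    · have hk : 3 ≤ k := by
        rcases hk.eq_or_lt with rfl | hk
        · exact absurd (hmk ▸ hn) (Nat.not_odd_iff_even.2 (hm.add even_two))
        · exact hk
      refine (mul_le_mul (abs_eval_hsymm_le ha m) (abs_sum_pow_le_mul hκ hk)
        (abs_nonneg _) (by positivity)).trans_eq ?_
      ring
    · have hm := ih m (by omega) hm
      refine (mul_le_mul hm (abs_sum_pow_le a hk)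
        (abs_nonneg _) ((abs_nonneg _).trans hm)).trans_eq ?_
      ring

end PowerSumBounds

theorem rpow_half_le_ascFactorial (d : ℕ) {p : ℕ} (hp : 2 ≤ p) :
    ((d : ℝ) * (d + 1)) ^ ((p : ℝ) / 2) ≤ d.ascFactorial p := by
  have h₀ : (0 : ℝ) ≤ d * (d + 1) := by positivity
  have hs : √((d : ℝ) * (d + 1)) ≤ d + 1 := by
    rw [Real.sqrt_le_left (by positivity)]
    nlinarith [(Nat.cast_nonneg d : (0 : ℝ) ≤ d)]
  rw [Real.rpow_div_two_eq_sqrt _ h₀, Real.rpow_natCast]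
  induction p, hp using Nat.le_induction with
  | base =>
    rw [Real.sq_sqrt h₀]
    simp [Nat.ascFactorial, mul_comm]
  | succ p hp ih =>
    rw [pow_succ', Nat.ascFactorial_succ]
    push_cast
    gcongr
    have : (1 : ℝ) ≤ p := by exact_mod_cast (by omega : 1 ≤ p)
    linarith

section Monomial

open Finset

theorem eq_of_sum_mul_prod_pow_eq {σ R : Type*} [Fintype σ] [CommRing R] [IsDomain R]
    {S : σ → Set R} (hS : ∀ i, (S i).Infinite) {s : Finset (σ → ℕ)} {f g : (σ → ℕ) → R}
    (h : ∀ x : σ → R, (∀ i, x i ∈ S i) →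
      ∑ k ∈ s, f k * ∏ i, x i ^ k i = ∑ k ∈ s, g k * ∏ i, x i ^ k i)
    {k : σ → ℕ} (hk : k ∈ s) : f k = g k := by
  classical
  let P (f : (σ → ℕ) → R) : MvPolynomial σ R :=
    ∑ k ∈ s, MvPolynomial.monomial (Finsupp.equivFunOnFinite.symm k) (f k)
  have coeff_P (f) : (P f).coeff (Finsupp.equivFunOnFinite.symm k) = f k := by
    simp [P, MvPolynomial.coeff_sum, MvPolynomial.coeff_monomial, hk]
  have hP : P f = P g := MvPolynomial.funext_set S hS fun x hx => by
    simpa [P, MvPolynomial.eval_monomial, Finsupp.prod_fintype] using h x fun i => hx i trivial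
  rw [← coeff_P f, hP, coeff_P]

variable {ι 𝕜 : Type*} [Fintype ι] [RCLike 𝕜]

theorem prod_pow_mul_star_prod_pow (φ : ι → 𝕜) (k : ι → ℕ) :
    (∏ i, φ i ^ k i) * star (∏ i, φ i ^ k i) = ((∏ i, (‖φ i‖ ^ 2) ^ k i : ℝ) : 𝕜) := by
  simp [star_prod, ← prod_mul_distrib, ← mul_pow, RCLike.mul_conj]

theorem norm_dotProduct_pow_eq_sum [DecidableEq ι] (v φ : ι → 𝕜) (p : ℕ) :
    ((‖v ⬝ᵥ φ‖ ^ (2 * p) : ℝ) : 𝕜) =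
      ∑ k ∈ piAntidiag univ p, ∑ l ∈ piAntidiag univ p,
        (Nat.multinomial univ k * ∏ i, v i ^ k i) *
          star (Nat.multinomial univ l * ∏ i, v i ^ l i) *
          ((∏ i, φ i ^ k i) * star (∏ i, φ i ^ l i)) := by
  have hnorm : ((‖v ⬝ᵥ φ‖ ^ (2 * p) : ℝ) : 𝕜) = (v ⬝ᵥ φ) ^ p * star ((v ⬝ᵥ φ) ^ p) := by
    rw [RCLike.star_def, RCLike.mul_conj, norm_pow, mul_comm 2 p, pow_mul]
    push_cast
    rfl
  rw [hnorm, dotProduct, sum_pow_eq_sum_piAntidiag, star_sum, sum_mul_sum]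
  refine sum_congr rfl fun k _ => sum_congr rfl fun l _ => ?_
  simp only [mul_pow, prod_mul_distrib, star_mul', star_natCast]
  ring

end Monomial

section Unitary

variable {ι : Type*} [Fintype ι] [DecidableEq ι]

theorem diagonal_mem_unitaryGroup {R : Type*} [CommRing R] [StarRing R] {u : ι → R}
    (hu : ∀ i, u i * star (u i) = 1) : diagonal u ∈ unitaryGroup ι R := by
  rw [mem_unitaryGroup_iff, star_eq_conjTranspose, diagonal_conjTranspose, diagonal_mul_diagonal,
    ← diagonal_one]
  congr 1
  exact funext hu

theorem exists_unitaryGroup_smul_row_eq {𝕜 : Type*} [RCLike 𝕜] (i₀ : ι) (v : ι → 𝕜) :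
    ∃ V : unitaryGroup ι 𝕜, v = (√(∑ i, ‖v i‖ ^ 2) : 𝕜) • (V : Matrix ι ι 𝕜) i₀ := by
  rcases eq_or_ne v 0 with rfl | hv
  · exact ⟨1, by simp⟩
  let w : EuclideanSpace 𝕜 ι := WithLp.toLp 2 v
  have hw : (‖w‖ : 𝕜) ≠ 0 := by simpa [w] using hv
  have orth : Orthonormal 𝕜 (({i₀} : Set ι).domRestrict fun _ => (‖w‖ : 𝕜)⁻¹ • w) := by
    refine ⟨fun _ => ?_, fun i j hij => (hij (Subsingleton.elim i j)).elim⟩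
    exact norm_smul_inv_norm (by simpa using hw)
  obtain ⟨b, hb⟩ := orth.exists_orthonormalBasis_extension_of_card_eq (by simp)
  refine ⟨⟨Matrix.of fun i j => b i j, mem_unitaryGroup_iff.2 ?_⟩, ?_⟩
  · ext i j
    have h := orthonormal_iff_ite.1 b.orthonormal j i
    rw [PiLp.inner_apply] at h
    simpa [Matrix.mul_apply, Matrix.one_apply, eq_comm] using h
  · rw [← EuclideanSpace.norm_eq w]
    ext j
    simp only [Pi.smul_apply, of_apply, hb i₀ rfl, PiLp.smul_apply, smul_eq_mul]
    exact (mul_inv_cancel_left₀ hw _).symm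

theorem sum_norm_sq_unitary_mulVec {𝕜 : Type*} [RCLike 𝕜] (U : unitaryGroup ι 𝕜) (φ : ι → 𝕜) :
    ∑ i, ‖((U : Matrix ι ι 𝕜) *ᵥ φ) i‖ ^ 2 = ∑ i, ‖φ i‖ ^ 2 := by
  have h (φ : ι → 𝕜) : ((∑ i, ‖φ i‖ ^ 2 : ℝ) : 𝕜) = star φ ⬝ᵥ φ := by
    simp [dotProduct, RCLike.conj_mul]
  apply RCLike.ofReal_injective (K := 𝕜)
  rw [h, h, star_mulVec, dotProduct_mulVec, vecMul_vecMul, ← star_eq_conjTranspose,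
    mem_unitaryGroup_iff'.1 U.2, vecMul_one]

theorem exists_unit_pow_mul_star_pow_eq_neg_one {m n : ℕ} (h : m ≠ n) :
    ∃ z : ℂ, z * star z = 1 ∧ z ^ m * star z ^ n = -1 := by
  have hmn : (m : ℂ) - n ≠ 0 := sub_ne_zero.2 (by exact_mod_cast h)
  refine ⟨Complex.exp (Real.pi / (m - n) * Complex.I), ?_, ?_⟩
  · simp [← Complex.exp_conj, ← Complex.exp_add]
  · simp only [Complex.star_def, ← Complex.exp_conj, ← Complex.exp_nat_mul, ← Complex.exp_add]
    rw [← Complex.exp_pi_mul_I]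
    congr 1
    simp only [map_mul, map_div₀, Complex.conj_ofReal, map_sub, map_natCast, Complex.conj_I,
      mul_neg]
    field_simp
    ring

end Unitary

section HaarState

open Finset
open MvPolynomial (eval hsymm)

variable {ι : Type*} [Fintype ι] [DecidableEq ι]

/-- `ν` is the law of a Haar-random pure state: the unitarily invariant probability measure on the
unit sphere of `ℂ^ι`. Being carried by the sphere is an almost-everywhere condition, written out
because the norm of `ι → ℂ` is the supremum norm. -/
class IsHaarState (ν : Measure (ι → ℂ)) : Prop extends IsProbabilityMeasure ν where
  map_mulVec (V : unitaryGroup ι ℂ) : ν.map ((V : Matrix ι ι ℂ) *ᵥ ·) = ν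
  ae_sum_norm_sq : ∀ᵐ φ ∂ν, ∑ i, ‖φ i‖ ^ 2 = 1

theorem isHaarState_map_mulVec [MeasurableSpace (unitaryGroup ι ℂ)] [BorelSpace (unitaryGroup ι ℂ)]
    (μ : Measure (unitaryGroup ι ℂ)) [μ.IsMulLeftInvariant] [IsProbabilityMeasure μ]
    {ψ : ι → ℂ} (hψ : ∑ i, ‖ψ i‖ ^ 2 = 1) :
    IsHaarState (μ.map fun U : unitaryGroup ι ℂ => (U : Matrix ι ι ℂ) *ᵥ ψ) := by
  have hmeas : Measurable fun U : unitaryGroup ι ℂ => (U : Matrix ι ι ℂ) *ᵥ ψ :=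
    Continuous.measurable (by fun_prop)
  have := Measure.isProbabilityMeasure_map hmeas.aemeasurable (μ := μ)
  refine ⟨fun V => ?_, ?_⟩
  · have hV : Measurable fun φ : ι → ℂ => (V : Matrix ι ι ℂ) *ᵥ φ :=
      Continuous.measurable (by fun_prop)
    conv_rhs => rw [← map_mul_left_eq_self μ V, Measure.map_map hmeas (measurable_const_mul V)]
    rw [Measure.map_map hV hmeas]
    congr 1
    ext1 U
    simp [mulVec_mulVec]
  · refine (ae_map_iff hmeas.aemeasurable
      (isClosed_eq (by fun_prop) continuous_const).measurableSet).2 (ae_of_all _ fun U => ?_)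
    rw [sum_norm_sq_unitary_mulVec, hψ]

theorem IsHaarState.nonempty (ν : Measure (ι → ℂ)) [IsHaarState ν] : Nonempty ι := by
  obtain ⟨φ, hφ⟩ := (ae_sum_norm_sq (ν := ν)).exists
  by_contra h
  simp [not_nonempty_iff.1 h] at hφ

variable (ν : Measure (ι → ℂ)) [IsHaarState ν]

theorem IsHaarState.integrable_of_continuous {E : Type*} [NormedAddCommGroup E]
    {f : (ι → ℂ) → E} (hf : Continuous f) : Integrable f ν := by
  have hball : ∀ᵐ φ ∂ν, φ ∈ Metric.closedBall (0 : ι → ℂ) 1 := by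
    filter_upwards [ae_sum_norm_sq (ν := ν)] with φ hφ
    refine mem_closedBall_zero_iff.2 ((pi_norm_le_iff_of_nonneg zero_le_one).2 fun i => ?_)
    rw [← sq_le_one_iff₀ (norm_nonneg _), ← hφ]
    exact single_le_sum (f := fun j => ‖φ j‖ ^ 2) (fun _ _ => sq_nonneg _) (mem_univ i)
  rw [← Measure.restrict_eq_self_of_ae_mem hball]
  exact hf.continuousOn.integrableOn_compact (isCompact_closedBall 0 1)

theorem IsHaarState.integral_comp_mulVec {E : Type*} [NormedAddCommGroup E] [NormedSpace ℝ E]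
    (V : unitaryGroup ι ℂ) (f : (ι → ℂ) → E) :
    ∫ φ, f ((V : Matrix ι ι ℂ) *ᵥ φ) ∂ν = ∫ φ, f φ ∂ν := by
  have hcont : Continuous fun φ : ι → ℂ => (V : Matrix ι ι ℂ) *ᵥ φ := by fun_prop
  have hinj : Function.Injective ((V : Matrix ι ι ℂ) *ᵥ ·) :=
    Function.LeftInverse.injective (g := ((star V : unitaryGroup ι ℂ) : Matrix ι ι ℂ).mulVec)
      fun φ => by simp [mulVec_mulVec]
  exact MeasurePreserving.integral_comp ⟨hcont.measurable, map_mulVec V⟩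
    (hcont.measurableEmbedding hinj) f

theorem IsHaarState.integral_monomial_mul_star_monomial_eq_zero {k l : ι → ℕ} (h : k ≠ l) :
    ∫ φ, (∏ i, φ i ^ k i) * star (∏ i, φ i ^ l i) ∂ν = 0 := by
  obtain ⟨j, hj⟩ := Function.ne_iff.1 h
  obtain ⟨z, hz, hzkl⟩ := exists_unit_pow_mul_star_pow_eq_neg_one hj
  have hphase : diagonal (Function.update (1 : ι → ℂ) j z) ∈ unitaryGroup ι ℂ :=
    diagonal_mem_unitaryGroup fun i => by
      rcases eq_or_ne i j with rfl | hi
      · simpa using hz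
      · simp [hi]
  have hmonomial (m : ι → ℕ) (φ : ι → ℂ) :
      ∏ i, (diagonal (Function.update 1 j z) *ᵥ φ) i ^ m i = z ^ m j * ∏ i, φ i ^ m i := by
    simp only [mulVec_diagonal, mul_pow, prod_mul_distrib]
    congr 1
    rw [prod_eq_single j] <;> simp +contextual
  have hneg := integral_comp_mulVec ν ⟨_, hphase⟩
    fun φ => (∏ i, φ i ^ k i) * star (∏ i, φ i ^ l i)
  simp only [hmonomial, star_mul', star_pow, mul_mul_mul_comm, hzkl, neg_one_mul,
    integral_neg] at hneg
  exact CharZero.neg_eq_self_iff.1 hneg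

theorem IsHaarState.integral_norm_dotProduct_pow_eq_sum (v : ι → ℂ) (p : ℕ) :
    ∫ φ, ‖v ⬝ᵥ φ‖ ^ (2 * p) ∂ν =
      ∑ k ∈ piAntidiag univ p, (Nat.multinomial univ k : ℝ) ^ 2 *
        (∫ φ, ∏ i, (‖φ i‖ ^ 2) ^ k i ∂ν) * ∏ i, (‖v i‖ ^ 2) ^ k i := by
  have hint (k l : ι → ℕ) (c : ℂ) :
      Integrable (fun φ => c * ((∏ i, φ i ^ k i) * star (∏ i, φ i ^ l i))) ν :=
    integrable_of_continuous ν (by fun_prop)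
  apply RCLike.ofReal_injective (K := ℂ)
  rw [← integral_ofReal]
  simp only [norm_dotProduct_pow_eq_sum]
  rw [integral_finsetSum _ fun k _ => integrable_finsetSum _ fun l _ => hint k l _,
    RCLike.ofReal_sum]
  refine sum_congr rfl fun k hk => ?_
  rw [integral_finsetSum _ fun l _ => hint k l _, sum_eq_single_of_mem k hk]
  · simp only [star_mul', star_natCast, mul_mul_mul_comm (Nat.multinomial _ k : ℂ),
      prod_pow_mul_star_prod_pow, integral_const_mul, integral_ofReal]
    push_cast
    ring
  · intro l _ hlk
    rw [integral_const_mul, integral_monomial_mul_star_monomial_eq_zero ν hlk.symm, mul_zero]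

theorem IsHaarState.integral_norm_dotProduct_pow (v : ι → ℂ) (i₀ : ι) (p : ℕ) :
    ∫ φ, ‖v ⬝ᵥ φ‖ ^ (2 * p) ∂ν = (∑ i, ‖v i‖ ^ 2) ^ p * ∫ φ, ‖φ i₀‖ ^ (2 * p) ∂ν := by
  obtain ⟨V, hV⟩ := exists_unitaryGroup_smul_row_eq i₀ v
  have hr : 0 ≤ ∑ i, ‖v i‖ ^ 2 := sum_nonneg fun i _ => sq_nonneg _
  have hnorm (φ : ι → ℂ) : ‖v ⬝ᵥ φ‖ ^ (2 * p) =
      (∑ i, ‖v i‖ ^ 2) ^ p * ‖((V : Matrix ι ι ℂ) *ᵥ φ) i₀‖ ^ (2 * p) := by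
    conv_lhs => rw [hV]
    rw [smul_dotProduct, norm_smul, mul_pow, RCLike.norm_ofReal, pow_mul, sq_abs, Real.sq_sqrt hr]
    rfl
  simp only [hnorm, integral_const_mul]
  rw [integral_comp_mulVec ν V fun φ => ‖φ i₀‖ ^ (2 * p)]

theorem IsHaarState.multinomial_mul_integral_prod_norm_sq_pow (i₀ : ι) {k : ι → ℕ} {p : ℕ}
    (hk : k ∈ piAntidiag univ p) :
    Nat.multinomial univ k * ∫ φ, ∏ i, (‖φ i‖ ^ 2) ^ k i ∂ν = ∫ φ, ‖φ i₀‖ ^ (2 * p) ∂ν := by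
  have hcoeff : (Nat.multinomial univ k : ℝ) ^ 2 * ∫ φ, ∏ i, (‖φ i‖ ^ 2) ^ k i ∂ν =
      Nat.multinomial univ k * ∫ φ, ‖φ i₀‖ ^ (2 * p) ∂ν := by
    refine eq_of_sum_mul_prod_pow_eq (fun _ => Set.Ici_infinite (0 : ℝ)) (fun x hx => ?_) hk
      (f := fun k => (Nat.multinomial univ k : ℝ) ^ 2 * ∫ φ, ∏ i, (‖φ i‖ ^ 2) ^ k i ∂ν)
      (g := fun k => Nat.multinomial univ k * ∫ φ, ‖φ i₀‖ ^ (2 * p) ∂ν)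
    have hsq (i : ι) : ‖(√(x i) : ℂ)‖ ^ 2 = x i := by
      rw [Complex.norm_real, Real.norm_eq_abs, sq_abs, Real.sq_sqrt (hx i)]
    have h := (integral_norm_dotProduct_pow_eq_sum ν (fun i => (√(x i) : ℂ)) p).symm.trans
      (integral_norm_dotProduct_pow ν _ i₀ p)
    simp only [hsq, sum_pow_eq_sum_piAntidiag, sum_mul] at h
    simpa only [mul_right_comm] using h
  rw [sq, mul_assoc] at hcoeff
  exact mul_left_cancel₀ (by exact_mod_cast (Nat.multinomial_pos _ _).ne') hcoeff

theorem IsHaarState.integral_sum_mul_norm_sq_pow (a : ι → ℝ) (i₀ : ι) (p : ℕ) :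
    ∫ φ, (∑ i, a i * ‖φ i‖ ^ 2) ^ p ∂ν =
      (∫ φ, ‖φ i₀‖ ^ (2 * p) ∂ν) * eval a (hsymm ι ℝ p) := by
  simp only [sum_pow_eq_sum_piAntidiag, mul_pow, prod_mul_distrib, eval_hsymm, mul_sum]
  rw [integral_finsetSum _ fun k _ => integrable_of_continuous ν (by fun_prop)]
  refine sum_congr rfl fun k hk => ?_
  simp only [← mul_assoc, integral_const_mul]
  rw [mul_right_comm, multinomial_mul_integral_prod_norm_sq_pow ν i₀ hk]

theorem IsHaarState.integral_sum_mul_norm_sq_pow_mul_multichoose (a : ι → ℝ) (p : ℕ) :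
    (∫ φ, (∑ i, a i * ‖φ i‖ ^ 2) ^ p ∂ν) * (Fintype.card ι).multichoose p =
      eval a (hsymm ι ℝ p) := by
  obtain ⟨i₀⟩ := IsHaarState.nonempty ν
  have hone : (1 : ℝ) = (∫ φ, ‖φ i₀‖ ^ (2 * p) ∂ν) * (Fintype.card ι).multichoose p := by
    rw [← eval_one_hsymm ι, ← integral_sum_mul_norm_sq_pow ν 1 i₀ p,
      integral_congr_ae (g := fun _ => 1)]
    · simp
    · filter_upwards [ae_sum_norm_sq (ν := ν)] with φ hφ
      simp [hφ]
  rw [integral_sum_mul_norm_sq_pow ν a i₀, mul_right_comm, ← hone, one_mul]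

end HaarState

section Observable

open MvPolynomial (eval hsymm)

variable {ι : Type*} [Fintype ι] [DecidableEq ι]

theorem trace_pow_eq_sum_eigenvalues_pow {𝕜 : Type*} [RCLike 𝕜] {A : Matrix ι ι 𝕜}
    (hA : A.IsHermitian) (n : ℕ) : (A ^ n).trace = ∑ i, (hA.eigenvalues i : 𝕜) ^ n := by
  conv_lhs => rw [hA.spectral_theorem]
  rw [← map_pow, Unitary.conjStarAlgAut_apply, trace_mul_comm, ← mul_assoc,
    Unitary.coe_star_mul_self, one_mul, diagonal_pow, trace_diagonal]
  rfl

theorem star_dotProduct_mulVec_eq_sum_eigenvalues {𝕜 : Type*} [RCLike 𝕜] {A : Matrix ι ι 𝕜}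
    (hA : A.IsHermitian) (φ : ι → 𝕜) :
    star φ ⬝ᵥ A *ᵥ φ = ((∑ i, hA.eigenvalues i *
      ‖((star hA.eigenvectorUnitary : unitaryGroup ι 𝕜).1 *ᵥ φ) i‖ ^ 2 : ℝ) : 𝕜) := by
  set V := hA.eigenvectorUnitary with hV
  have hstar : star φ ᵥ* (V : Matrix ι ι 𝕜) =
      star (((star V : unitaryGroup ι 𝕜) : Matrix ι ι 𝕜) *ᵥ φ) := by
    rw [star_mulVec, Unitary.coe_star, star_eq_conjTranspose, conjTranspose_conjTranspose]
  conv_lhs => rw [hA.spectral_theorem]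
  rw [Unitary.conjStarAlgAut_apply, ← hV, ← mulVec_mulVec, ← mulVec_mulVec, dotProduct_mulVec,
    hstar, ← Unitary.coe_star]
  simp only [dotProduct, mulVec_diagonal, Pi.star_apply, Function.comp_apply]
  push_cast
  refine Finset.sum_congr rfl fun i _ => ?_
  rw [← RCLike.conj_mul, ← RCLike.star_def]
  ring

theorem trace_unitary_conj_vecMulVec_mul_sub {𝕜 : Type*} [RCLike 𝕜] (U : unitaryGroup ι 𝕜)
    {ψ : ι → 𝕜} (hψ : ∑ i, ‖ψ i‖ ^ 2 = 1) (H : Matrix ι ι 𝕜) (t : 𝕜) :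
    ((U : Matrix ι ι 𝕜) * vecMulVec ψ (star ψ) * star (U : Matrix ι ι 𝕜) * H).trace - t =
      star ((U : Matrix ι ι 𝕜) *ᵥ ψ) ⬝ᵥ (H - t • 1) *ᵥ ((U : Matrix ι ι 𝕜) *ᵥ ψ) := by
  set φ := (U : Matrix ι ι 𝕜) *ᵥ ψ with hφ
  have hunit : star φ ⬝ᵥ φ = 1 := by
    have h : ((∑ i, ‖φ i‖ ^ 2 : ℝ) : 𝕜) = 1 := by
      rw [sum_norm_sq_unitary_mulVec, hψ, RCLike.ofReal_one]
    simpa [dotProduct, RCLike.conj_mul] using h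
  have hproj : (U : Matrix ι ι 𝕜) * vecMulVec ψ (star ψ) * star (U : Matrix ι ι 𝕜) =
      vecMulVec φ (star φ) := by
    rw [mul_vecMulVec, vecMulVec_mul, hφ, star_mulVec, star_eq_conjTranspose]
  rw [hproj, vecMulVec_mul, trace_vecMulVec, sub_mulVec, dotProduct_sub, smul_mulVec, one_mulVec,
    dotProduct_smul, hunit, smul_eq_mul, mul_one, dotProduct_mulVec _ H, dotProduct_comm φ]

theorem IsHaarState.integral_re_star_dotProduct_mulVec_pow (ν : Measure (ι → ℂ)) [IsHaarState ν]
    {A : Matrix ι ι ℂ} (hA : A.IsHermitian) (p : ℕ) :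
    (∫ φ, (star φ ⬝ᵥ A *ᵥ φ).re ^ p ∂ν) * (Fintype.card ι).multichoose p =
      eval hA.eigenvalues (hsymm ι ℝ p) := by
  simp only [star_dotProduct_mulVec_eq_sum_eigenvalues hA, ← RCLike.re_eq_complex_re,
    RCLike.ofReal_re]
  rw [integral_comp_mulVec ν _ fun φ => (∑ i, hA.eigenvalues i * ‖φ i‖ ^ 2) ^ p,
    integral_sum_mul_norm_sq_pow_mul_multichoose]

theorem IsHaarState.abs_integral_re_pow_mul_ascFactorial_le_of_odd (ν : Measure (ι → ℂ))
    [IsHaarState ν] {A : Matrix ι ι ℂ} (hA : A.IsHermitian) (htr : A.trace = 0) {κ : ℝ}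
    (hκ : ∑ i, |hA.eigenvalues i| ^ 3 ≤ κ * √(∑ i, hA.eigenvalues i ^ 2) ^ 3)
    {p : ℕ} (hp : Odd p) :
    |∫ φ, (star φ ⬝ᵥ A *ᵥ φ).re ^ p ∂ν| * (Fintype.card ι).ascFactorial p ≤
      κ * √(∑ i, hA.eigenvalues i ^ 2) ^ p * numDerangements p := by
  have hsum : ∑ i, hA.eigenvalues i = 0 := by
    rwa [hA.trace_eq_sum_eigenvalues, ← RCLike.ofReal_sum, RCLike.ofReal_eq_zero] at htr
  have hbound := abs_eval_hsymm_le_of_odd hsum hκ hp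
  rw [← integral_re_star_dotProduct_mulVec_pow ν hA, abs_mul, Nat.abs_cast, ← mul_div_assoc,
    le_div_iff₀ (by positivity), mul_assoc] at hbound
  rwa [Nat.ascFactorial_eq_factorial_mul_choose', ← Nat.multichoose_eq, mul_comm p.factorial,
    Nat.cast_mul]

theorem sum_abs_eigenvalues_pow_three {d : ℕ} {A : Matrix (Fin d) (Fin d) ℂ} (hA : A.IsHermitian) :
    ∑ i, |hA.eigenvalues i| ^ 3 = √(eta hA) * √(∑ i, hA.eigenvalues i ^ 2) ^ 3 := by
  have hnn : 0 ≤ ∑ i, hA.eigenvalues i ^ 2 := Finset.sum_nonneg fun _ _ => sq_nonneg _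
  have heta : eta hA =
      ((∑ i, |hA.eigenvalues i| ^ 3) / √(∑ i, hA.eigenvalues i ^ 2) ^ 3) ^ 2 := by
    rw [eta, div_pow, ← pow_mul, mul_comm 3 2, pow_mul, Real.sq_sqrt hnn]
  rw [heta, Real.sqrt_sq (by positivity), div_mul_cancel_of_imp]
  intro h
  rw [pow_eq_zero_iff three_ne_zero, Real.sqrt_eq_zero hnn,
    Finset.sum_eq_zero_iff_of_nonneg fun _ _ => sq_nonneg _] at h
  exact Finset.sum_eq_zero fun i hi => by simpa using h i hi

theorem integral_re_trace_unitary_conj_sub_pow [MeasurableSpace (unitaryGroup ι ℂ)]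
    [BorelSpace (unitaryGroup ι ℂ)] (μ : Measure (unitaryGroup ι ℂ)) {ψ : ι → ℂ}
    (hψ : ∑ i, ‖ψ i‖ ^ 2 = 1) (H : Matrix ι ι ℂ) (t : ℂ) (p : ℕ) :
    ∫ U : unitaryGroup ι ℂ, (((U : Matrix ι ι ℂ) * vecMulVec ψ (star ψ) *
        star (U : Matrix ι ι ℂ) * H).trace.re - t.re) ^ p ∂μ =
      ∫ φ, (star φ ⬝ᵥ (H - t • 1) *ᵥ φ).re ^ p
        ∂μ.map fun U : unitaryGroup ι ℂ => (U : Matrix ι ι ℂ) *ᵥ ψ := by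
  rw [integral_map (Continuous.aemeasurable (by fun_prop))
    (Continuous.aestronglyMeasurable (by fun_prop))]
  simp only [← trace_unitary_conj_vecMulVec_mul_sub _ hψ, Complex.sub_re]

theorem re_trace_sq_rpow_half {A : Matrix ι ι ℂ} (hA : A.IsHermitian) (p : ℕ) :
    (A ^ 2).trace.re ^ ((p : ℝ) / 2) = √(∑ i, hA.eigenvalues i ^ 2) ^ p := by
  have htr : (A ^ 2).trace.re = ∑ i, hA.eigenvalues i ^ 2 := by
    rw [trace_pow_eq_sum_eigenvalues_pow hA, Complex.re_sum]
    norm_cast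
  rw [htr, Real.rpow_div_two_eq_sqrt _ (Finset.sum_nonneg fun _ _ => sq_nonneg _),
    Real.rpow_natCast]

end Observable

/-- **Statement 11.** Pure-state odd central moments are small: for odd `p ≥ 3`,
`|Σ^(p)| ≤ √η_{ΔH}·⌈p!/e⌉·(Tr[ΔH²])^{p/2}/(d(d+1))^{p/2}`. -/
theorem pure_state_odd_moment_bound (d : ℕ) (hd : 2 ≤ d)
    (μ : Measure (Matrix.unitaryGroup (Fin d) ℂ))
    [μ.IsHaarMeasure] [IsProbabilityMeasure μ]
    (H : Matrix (Fin d) (Fin d) ℂ) (hH : H.IsHermitian)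
    (hΔH : (H - (H.trace / (d : ℂ)) • (1 : Matrix (Fin d) (Fin d) ℂ)).IsHermitian)
    (hΔHne : H - (H.trace / (d : ℂ)) • (1 : Matrix (Fin d) (Fin d) ℂ) ≠ 0)
    (ψ : Fin d → ℂ) (hψ : ∑ i, ‖ψ i‖ ^ 2 = 1)
    (p : ℕ) (hp : 3 ≤ p) (hpo : Odd p)
    (Sp : ℝ)
    (hSp : Sp = ∫ U : Matrix.unitaryGroup (Fin d) ℂ,
        (((U : Matrix (Fin d) (Fin d) ℂ) * Matrix.vecMulVec ψ (star ψ)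
            * star (U : Matrix (Fin d) (Fin d) ℂ) * H).trace.re - H.trace.re / d) ^ p ∂μ) :
    |Sp| ≤ Real.sqrt (eta hΔH) * (⌈(p.factorial : ℝ) / Real.exp 1⌉ : ℝ)
        * (((H - (H.trace / (d : ℂ)) • 1) ^ 2).trace.re) ^ ((p : ℝ) / 2)
        / ((d : ℝ) * ((d : ℝ) + 1)) ^ ((p : ℝ) / 2) := by
  have := isHaarState_map_mulVec μ hψ
  set s := √(∑ i, hΔH.eigenvalues i ^ 2) with hs
  have hmoment : |Sp| * d.ascFactorial p ≤ √(eta hΔH) * s ^ p * numDerangements p := by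
    have htr : (H - (H.trace / (d : ℂ)) • (1 : Matrix (Fin d) (Fin d) ℂ)).trace = 0 := by
      simp [show d ≠ 0 by omega]
    simpa only [hSp, ← Complex.div_natCast_re, integral_re_trace_unitary_conj_sub_pow μ hψ,
      Fintype.card_fin] using
      IsHaarState.abs_integral_re_pow_mul_ascFactorial_le_of_odd
        (μ.map fun U : unitaryGroup (Fin d) ℂ => (U : Matrix (Fin d) (Fin d) ℂ) *ᵥ ψ) hΔH htr
        (sum_abs_eigenvalues_pow_three hΔH).le hpo
  have hder : (numDerangements p : ℝ) ≤ ⌈(p.factorial : ℝ) / Real.exp 1⌉ :=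
    (numDerangements_le_factorial_div_exp hpo).trans (Int.le_ceil _)
  rw [re_trace_sq_rpow_half hΔH, ← hs, le_div_iff₀ (by positivity)]
  calc |Sp| * ((d : ℝ) * (d + 1)) ^ ((p : ℝ) / 2)
      ≤ |Sp| * d.ascFactorial p := by gcongr; exact rpow_half_le_ascFactorial d (by omega)
    _ ≤ √(eta hΔH) * s ^ p * numDerangements p := hmoment
    _ ≤ √(eta hΔH) * s ^ p * ⌈(p.factorial : ℝ) / Real.exp 1⌉ := by gcongr
    _ = √(eta hΔH) * ⌈(p.factorial : ℝ) / Real.exp 1⌉ * s ^ p := by ring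
end
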